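/- Let 1 ≤ p, q, r, s ≤ ∞ satisfy p ≤ q' and q ≤ min{r, r', s, s'}. Then there exists a constant C > 0 such that for every Schwartz function a on ℝ^{2d} and every Schwartz function f on ℝ^d one has ‖a(x,D)f‖_{M^{r,s}} ≤ C · ‖a‖_{M^{p,q}} · ‖f‖_{M^{r,s}}. -/

import Mathlib

open MeasureTheory SchwartzMap Complex ENNReal NNReal

noncomputable section

/-- Mixed `L^p`-type norm of an `ℝ≥0∞`-valued function, with the usual
`essSup` modification when `p = ∞`. -/
def lqNorm {α : Type*} [MeasurableSpace α] (μ : Measure α) (p : ℝ≥0∞)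
    (f : α → ℝ≥0∞) : ℝ≥0∞ :=
  if p = ∞ then essSup f μ else (∫⁻ a, f a ^ p.toReal ∂μ) ^ (1 / p.toReal)

/-- Conjugate exponent in `ℝ≥0∞` : `1/p + 1/p' = 1`, with `1' = ∞`, `∞' = 1`. -/
def dualExp (p : ℝ≥0∞) : ℝ≥0∞ :=
  if p = 1 then ∞ else if p = ∞ then 1 else ENNReal.ofReal (p.toReal / (p.toReal - 1))

/-- `1/p` as a real number, with the convention `1/∞ = 0`. -/
def invR (p : ℝ≥0∞) : ℝ := (p⁻¹).toReal

/-- The Gaussian window `G(t) = exp(-π |t|²)` (as a complex-valued function). -/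
def gaussWin {ι : Type*} [Fintype ι] (t : EuclideanSpace ℝ ι) : ℂ :=
  Complex.exp (-(Real.pi * ‖t‖ ^ 2))

/-- Short-time Fourier transform with Gaussian window:
`V_G F (x, ω) = ∫ F t * conj (G (t - x)) * exp (-2πi ω⬝t) dt`. -/
def STFT {ι : Type*} [Fintype ι] (F : EuclideanSpace ℝ ι → ℂ)
    (x ω : EuclideanSpace ℝ ι) : ℂ :=
  ∫ t, F t * (starRingEnd ℂ) (gaussWin (t - x)) *
    Complex.exp (Complex.I * (-(2 * Real.pi * (inner ℝ ω t : ℝ))))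

/-- Modulation space norm `M^{p,q}`. -/
def modNorm {ι : Type*} [Fintype ι] (p q : ℝ≥0∞)
    (F : EuclideanSpace ℝ ι → ℂ) : ℝ≥0∞ :=
  lqNorm volume q fun ω => lqNorm volume p fun x => (‖STFT F x ω‖₊ : ℝ≥0∞)

/-- Wiener amalgam norm `W(𝓕 L^p, L^q)` (local component Fourier–Lebesgue). -/
def wFLNorm {ι : Type*} [Fintype ι] (p q : ℝ≥0∞)
    (F : EuclideanSpace ℝ ι → ℂ) : ℝ≥0∞ :=
  lqNorm volume q fun x => lqNorm volume p fun ω => (‖STFT F x ω‖₊ : ℝ≥0∞)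

/-- The unit cube `[0,1)^d`. -/
def unitCube (d : ℕ) : Set (EuclideanSpace ℝ (Fin d)) :=
  {x | ∀ i, x i ∈ Set.Ico (0 : ℝ) 1}

/-- Wiener amalgam norm
`‖f‖_{W(L^r,L^s)} = ( Σ_{n ∈ ℤ^d} ( ∫_{[0,1)^d} |f(x+n)|^r dx )^{s/r} )^{1/s}`. -/
def wNorm (d : ℕ) (r s : ℝ≥0∞) (f : EuclideanSpace ℝ (Fin d) → ℂ) : ℝ≥0∞ :=
  lqNorm (Measure.count : Measure (Fin d → ℤ)) s fun n =>
    lqNorm (volume.restrict (unitCube d)) r fun x =>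
      (‖f (x + show EuclideanSpace ℝ (Fin d) from WithLp.toLp 2 fun i => (n i : ℝ))‖₊ : ℝ≥0∞)

/-- Pairing `(x, ω) ∈ ℝ^d × ℝ^d ↦ ℝ^{2d}`. -/
def pairE {d : ℕ} (x ω : EuclideanSpace ℝ (Fin d)) :
    EuclideanSpace ℝ (Fin d ⊕ Fin d) :=
  WithLp.toLp 2 fun i => Sum.elim (fun j => x j) (fun j => ω j) i

/-- First (space) component of a point of `ℝ^{2d}`. -/
def xpart {d : ℕ} (z : EuclideanSpace ℝ (Fin d ⊕ Fin d)) :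
    EuclideanSpace ℝ (Fin d) := WithLp.toLp 2 fun i => z (Sum.inl i)

/-- Second (frequency) component of a point of `ℝ^{2d}`. -/
def wpart {d : ℕ} (z : EuclideanSpace ℝ (Fin d ⊕ Fin d)) :
    EuclideanSpace ℝ (Fin d) := WithLp.toLp 2 fun i => z (Sum.inr i)

/-- Fourier transform `f̂(ω) = ∫ f t e^{-2πi t⬝ω} dt`. -/
def fTrans {ι : Type*} [Fintype ι] (f : EuclideanSpace ℝ ι → ℂ)
    (ω : EuclideanSpace ℝ ι) : ℂ :=
  ∫ t, f t * Complex.exp (Complex.I * (-(2 * Real.pi * (inner ℝ t ω : ℝ))))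

/-- Kohn–Nirenberg operator `a(x,D) f (x) = ∫ a(x,ω) f̂(ω) e^{2πi x⬝ω} dω`. -/
def KNop {d : ℕ} (a : EuclideanSpace ℝ (Fin d ⊕ Fin d) → ℂ)
    (f : EuclideanSpace ℝ (Fin d) → ℂ) (x : EuclideanSpace ℝ (Fin d)) : ℂ :=
  ∫ ω, a (pairE x ω) * fTrans f ω *
    Complex.exp (Complex.I * (2 * Real.pi * (inner ℝ x ω : ℝ)))

/-- Weyl operator `L_σ f (x) = ∫∫ e^{2πi (x-y)⬝ω} σ((x+y)/2, ω) f(y) dy dω`. -/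
def weylOp {d : ℕ} (σ : EuclideanSpace ℝ (Fin d ⊕ Fin d) → ℂ)
    (f : EuclideanSpace ℝ (Fin d) → ℂ) (x : EuclideanSpace ℝ (Fin d)) : ℂ :=
  ∫ y, ∫ ω, Complex.exp (Complex.I * (2 * Real.pi * (inner ℝ (x - y) ω : ℝ))) *
    σ (pairE ((2 : ℝ)⁻¹ • (x + y)) ω) * f y

/-- Cross-Wigner distribution
`W(g,f)(x,ω) = ∫ g(x+t/2) conj(f(x−t/2)) e^{−2πi ω⬝t} dt`. -/
def wigner {d : ℕ} (g f : EuclideanSpace ℝ (Fin d) → ℂ)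
    (z : EuclideanSpace ℝ (Fin d ⊕ Fin d)) : ℂ :=
  ∫ t, g (xpart z + (2 : ℝ)⁻¹ • t) * (starRingEnd ℂ) (f (xpart z - (2 : ℝ)⁻¹ • t)) *
    Complex.exp (Complex.I * (-(2 * Real.pi * (inner ℝ (wpart z) t : ℝ))))

end

/-!
Expanding `f̂` over the short-time Fourier transform of `f` turns the short-time Fourier transform
of `a(x,D)f` into an integral operator applied to that of `f`. Its kernel is, up to a unimodular
factor and a linear change of variables, the short-time Fourier transform of `a` for the chirped
window `G(x) G(ω)² exp(2πi x·ω)`. This window is an `L¹` superposition of time-frequency shifts of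
the Gaussian, so replacing it by the Gaussian costs only a constant; the analogous expansion of the
Gaussian itself gives `M^{p,q} ⊆ M^{q',q}`. Finally, Young's inequality for kernels that are not
translation invariant, applied in each of the two variables, shows that a kernel in `L^{q',q}` acts
boundedly on `L^{r,s}` when `q ≤ r, s ≤ q'`.
-/

open scoped FourierTransform

noncomputable section

section Exponents

variable {p q r : ℝ≥0∞}

lemma holderConjugate_dualExp (hp : 1 ≤ p) : p.HolderConjugate (dualExp p) := by
  rw [dualExp]
  split_ifs with h_one h_top
  · exact h_one ▸ inferInstance
  · exact h_top ▸ inferInstance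
  · lift p to ℝ≥0 using h_top
    have hp' : (1 : ℝ) < p := by exact_mod_cast hp.lt_of_ne' h_one
    have hpq := Real.HolderConjugate.conjExponent hp'
    rw [ENNReal.coe_toReal, ← Real.conjExponent, ENNReal.ofReal]
    refine ENNReal.holderConjugate_coe_iff.2 (NNReal.holderConjugate_coe_iff.1 ?_)
    rwa [Real.coe_toNNReal _ hpq.symm.nonneg]

lemma le_dualExp_iff (hq : 1 ≤ q) : p ≤ dualExp q ↔ 1 ≤ p⁻¹ + q⁻¹ := by
  have := holderConjugate_dualExp hq
  rw [← ENNReal.inv_le_inv, ← ENNReal.HolderConjugate.one_sub_inv q (dualExp q),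
    tsub_le_iff_right]

lemma le_dualExp_comm (hp : 1 ≤ p) (hq : 1 ≤ q) : p ≤ dualExp q ↔ q ≤ dualExp p := by
  rw [le_dualExp_iff hq, le_dualExp_iff hp, add_comm]

lemma ne_top_of_le_of_le_dualExp (hqr : q ≤ r) (hqr' : q ≤ dualExp r) : q ≠ ∞ := by
  rintro rfl
  simp [dualExp, top_le_iff.1 hqr] at hqr'

end Exponents

section LpNorms

variable {α β : Type*} [MeasurableSpace α] [MeasurableSpace β] {μ : Measure α} {ν : Measure β}
  {p q : ℝ≥0∞}

lemma lqNorm_eq_eLpNorm (hp : p ≠ 0) (f : α → ℝ≥0∞) : lqNorm μ p f = eLpNorm f p μ := by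
  by_cases hp_top : p = ∞
  · simp [lqNorm, hp_top, eLpNormEssSup]
  · simp [lqNorm, hp_top, eLpNorm_eq_lintegral_rpow_enorm_toReal hp hp_top]

lemma ae_le_eLpNorm_top (f : α → ℝ≥0∞) : ∀ᵐ x ∂μ, f x ≤ eLpNorm f ∞ μ := by
  simpa [eLpNormEssSup] using ENNReal.ae_le_essSup f

lemma eLpNorm_top_le_iff {f : α → ℝ≥0∞} {c : ℝ≥0∞} :
    eLpNorm f ∞ μ ≤ c ↔ ∀ᵐ x ∂μ, f x ≤ c := by
  refine ⟨fun h => ?_, fun h => ?_⟩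
  · filter_upwards [ae_le_eLpNorm_top f] with x hx using hx.trans h
  · simpa using eLpNormEssSup_le_of_ae_enorm_bound (f := f) h

lemma eLpNorm_coe_rpow {p : ℝ≥0} (hp : p ≠ 0) (f : α → ℝ≥0∞) :
    eLpNorm f p μ ^ (p : ℝ) = ∫⁻ x, f x ^ (p : ℝ) ∂μ := by
  simp [eLpNorm_nnreal_pow_eq_lintegral hp]

lemma eLpNorm_mono_ennreal_ae {f g : α → ℝ≥0∞} (h : ∀ᵐ x ∂μ, f x ≤ g x) :
    eLpNorm f p μ ≤ eLpNorm g p μ :=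
  eLpNorm_mono_enorm_ae (by simpa only [enorm_eq_self] using h)

lemma eLpNorm_mono_ennreal {f g : α → ℝ≥0∞} (h : ∀ x, f x ≤ g x) :
    eLpNorm f p μ ≤ eLpNorm g p μ :=
  eLpNorm_mono_ennreal_ae (ae_of_all _ h)

lemma eLpNorm_const_mul {f : α → ℝ≥0∞} (hf : Measurable f) (c : ℝ≥0∞) :
    eLpNorm (fun x => c * f x) p μ = c * eLpNorm f p μ := by
  induction p with
  | top => simpa [eLpNormEssSup] using ENNReal.essSup_const_mul
  | coe p =>
    rcases eq_or_ne p 0 with rfl | hp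
    · simp
    · have hp' : (0 : ℝ) < p := by positivity
      rw [← (ENNReal.strictMono_rpow_of_pos hp').injective.eq_iff,
        ENNReal.mul_rpow_of_nonneg _ _ hp'.le, eLpNorm_coe_rpow hp, eLpNorm_coe_rpow hp,
        ← lintegral_const_mul _ (hf.pow_const _)]
      simp_rw [ENNReal.mul_rpow_of_nonneg _ _ hp'.le]

lemma measurable_eLpNorm_left [SFinite μ] {f : α → β → ℝ≥0∞} (hf : Measurable f.uncurry) :
    Measurable fun y => eLpNorm (fun x => f x y) p μ := by
  induction p with
  | top =>
    refine measurable_of_Iic fun c => ?_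
    have preimage_eq : (fun y => eLpNorm (fun x => f x y) ∞ μ) ⁻¹' Set.Iic c =
        (fun y => μ ((fun x => (x, y)) ⁻¹' {z | c < f.uncurry z})) ⁻¹' {0} := by
      ext y
      simp only [Set.mem_preimage, Set.mem_Iic, eLpNorm_top_le_iff, ae_iff, not_le,
        Set.mem_singleton_iff, Function.uncurry, Set.preimage_ofPred_eq]
    rw [preimage_eq]
    exact measurable_measure_prodMk_right (measurableSet_lt measurable_const hf)
      (measurableSet_singleton 0)
  | coe p =>
    rcases eq_or_ne p 0 with rfl | hp
    · simp
    · simp only [eLpNorm_eq_lintegral_rpow_enorm_toReal (ENNReal.coe_ne_zero.2 hp)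
        ENNReal.coe_ne_top, enorm_eq_self]
      exact ((hf.comp measurable_swap).pow_const _).lintegral_prod_right.pow_const _

lemma measurable_eLpNorm_right [SFinite ν] {f : α → β → ℝ≥0∞} (hf : Measurable f.uncurry) :
    Measurable fun x => eLpNorm (f x) p ν :=
  measurable_eLpNorm_left (f := fun y x => f x y) (hf.comp measurable_swap)

lemma ae_ae_eq_zero_of_eLpNorm_eq_zero [SFinite μ] [SFinite ν] (hp : p ≠ 0)
    {f : α → β → ℝ≥0∞} (hf : Measurable f.uncurry) :
    ∀ᵐ x ∂μ, ∀ᵐ y ∂ν, eLpNorm (fun x => f x y) p μ = 0 → f x y = 0 := by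
  have measurable_norm : Measurable fun z : α × β => eLpNorm (fun x => f x z.2) p μ :=
    (measurable_eLpNorm_left hf).comp measurable_snd
  have measurableSet_imp : MeasurableSet
      {z : α × β | eLpNorm (fun x => f x z.2) p μ = 0 → f z.1 z.2 = 0} :=
    (measurable_norm (measurableSet_singleton 0)).imp (hf (measurableSet_singleton 0))
  rw [Measure.ae_ae_comm measurableSet_imp]
  refine ae_of_all _ fun y => Filter.eventually_imp_distrib_left.2 fun h => ?_
  exact (eLpNorm_eq_zero_iff hf.of_uncurry_right.aestronglyMeasurable hp).1 h

lemma lintegral_rpow_mul_eLpNorm_rpow_sub_le {f : α → ℝ≥0∞} (hf : Measurable f) {P : ℝ≥0} {q : ℝ}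
    (hq : 0 < q) (hqP : q ≤ P) :
    ∫⁻ x, f x ^ (P : ℝ) * eLpNorm f P μ ^ (q - P) ∂μ ≤ eLpNorm f P μ ^ q := by
  have hP : (0 : ℝ) < P := hq.trans_le hqP
  rw [lintegral_mul_const _ (hf.pow_const _), ← eLpNorm_coe_rpow (NNReal.coe_pos.1 hP).ne']
  rcases eq_or_ne (eLpNorm f P μ) 0 with h0 | h0
  · simp [h0, hP]
  rcases eq_or_ne (eLpNorm f P μ) ∞ with h_top | h_top
  · simp [h_top, hq]
  · rw [← ENNReal.rpow_add _ _ h0 h_top, add_sub_cancel]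

lemma lintegral_le_rpow_mul_rpow_of_weight {f w : β → ℝ≥0∞} (hf : Measurable f)
    (hw : Measurable w) (hw_top : ∀ᵐ y ∂ν, w y < ∞) (hw_zero : ∀ᵐ y ∂ν, w y = 0 → f y = 0)
    {P : ℝ} (hP : 1 ≤ P) :
    ∫⁻ y, f y ∂ν ≤
      (∫⁻ y, f y ^ P * w y ^ (1 - P) ∂ν) ^ (1 / P) * (∫⁻ y, w y ∂ν) ^ (1 - 1 / P) := by
  have hP0 : 0 < P := by positivity
  refine le_trans (lintegral_mono_ae ?_) (ENNReal.lintegral_mul_norm_pow_le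
    ((hf.pow_const P).mul (hw.pow_const (1 - P))).aemeasurable hw.aemeasurable
    (by positivity) (by rw [sub_nonneg, div_le_one hP0]; exact hP) (by ring))
  filter_upwards [hw_top, hw_zero] with y hy_top hy_zero
  rcases eq_or_ne (w y) 0 with hy | hy
  · simp [hy_zero hy]
  · have exponent_f : P * (1 / P) = 1 := by field_simp
    have exponent_w : (1 - P) * (1 / P) + (1 - 1 / P) = 0 := by field_simp; ring
    rw [Pi.mul_apply, ENNReal.mul_rpow_of_nonneg _ _ (by positivity), ← ENNReal.rpow_mul,
      ← ENNReal.rpow_mul, mul_assoc, ← ENNReal.rpow_add _ _ hy hy_top.ne, exponent_f, exponent_w]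
    simp

lemma eLpNorm_top_lintegral_le [SFinite μ] [SFinite ν] {f : α → β → ℝ≥0∞}
    (hf : Measurable f.uncurry) :
    eLpNorm (fun x => ∫⁻ y, f x y ∂ν) ∞ μ ≤ ∫⁻ y, eLpNorm (fun x => f x y) ∞ μ ∂ν := by
  have measurableSet_le_norm : MeasurableSet
      {z : α × β | f z.1 z.2 ≤ eLpNorm (fun x => f x z.2) ∞ μ} :=
    measurableSet_le hf ((measurable_eLpNorm_left hf).comp measurable_snd)
  have ae_ae_le : ∀ᵐ x ∂μ, ∀ᵐ y ∂ν, f x y ≤ eLpNorm (fun x => f x y) ∞ μ := by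
    rw [Measure.ae_ae_comm measurableSet_le_norm]
    exact ae_of_all _ fun y => ae_le_eLpNorm_top _
  rw [eLpNorm_top_le_iff]
  filter_upwards [ae_ae_le] with x hx using lintegral_mono_ae hx

-- Hölder against the weight `N y = ‖f (·, y)‖_P`, writing `f = (f^P N^(1-P))^(1/P) N^(1-1/P)`,
-- avoids the a priori finiteness of the left-hand side that the usual duality proof requires.
lemma eLpNorm_coe_lintegral_le [SFinite μ] [SFinite ν] {P : ℝ≥0} (hP : 1 ≤ P)
    {f : α → β → ℝ≥0∞} (hf : Measurable f.uncurry) :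
    eLpNorm (fun x => ∫⁻ y, f x y ∂ν) P μ ≤ ∫⁻ y, eLpNorm (fun x => f x y) P μ ∂ν := by
  set N := fun y => eLpNorm (fun x => f x y) P μ
  set S := ∫⁻ y, N y ∂ν
  have hP0 : P ≠ 0 := (zero_lt_one.trans_le hP).ne'
  have hP0' : (0 : ℝ) < P := by positivity
  have hP1 : (1 : ℝ) ≤ P := hP
  have hN : Measurable N := measurable_eLpNorm_left hf
  rcases eq_or_ne S ∞ with hS | hS
  · exact hS ▸ le_top
  have holder : ∀ᵐ x ∂μ, (∫⁻ y, f x y ∂ν) ^ (P : ℝ) ≤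
      (∫⁻ y, f x y ^ (P : ℝ) * N y ^ (1 - P : ℝ) ∂ν) * S ^ (P - 1 : ℝ) := by
    filter_upwards [ae_ae_eq_zero_of_eLpNorm_eq_zero (ν := ν) (ENNReal.coe_ne_zero.2 hP0) hf]
      with x hx
    refine (ENNReal.rpow_le_rpow (lintegral_le_rpow_mul_rpow_of_weight hf.of_uncurry_left hN
      (ae_lt_top hN hS) hx hP1) hP0'.le).trans_eq ?_
    rw [ENNReal.mul_rpow_of_nonneg _ _ hP0'.le, ← ENNReal.rpow_mul, ← ENNReal.rpow_mul,
      one_div_mul_cancel hP0'.ne', sub_mul, one_div_mul_cancel hP0'.ne', one_mul, ENNReal.rpow_one]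
  have hm : Measurable (Function.uncurry fun x y => f x y ^ (P : ℝ) * N y ^ (1 - P : ℝ)) :=
    (hf.pow_const _).mul ((hN.comp measurable_snd).pow_const _)
  rw [← ENNReal.rpow_le_rpow_iff hP0', eLpNorm_coe_rpow hP0]
  calc ∫⁻ x, (∫⁻ y, f x y ∂ν) ^ (P : ℝ) ∂μ
      ≤ ∫⁻ x, (∫⁻ y, f x y ^ (P : ℝ) * N y ^ (1 - P : ℝ) ∂ν) * S ^ (P - 1 : ℝ) ∂μ :=
        lintegral_mono_ae holder
    _ = (∫⁻ y, ∫⁻ x, f x y ^ (P : ℝ) * N y ^ (1 - P : ℝ) ∂μ ∂ν) * S ^ (P - 1 : ℝ) := by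
        rw [lintegral_mul_const _ hm.lintegral_prod_right, lintegral_lintegral_swap hm.aemeasurable]
    _ ≤ S * S ^ (P - 1 : ℝ) := by
        gcongr
        refine lintegral_mono fun y => ?_
        simpa using lintegral_rpow_mul_eLpNorm_rpow_sub_le hf.of_uncurry_right one_pos hP1
    _ = S ^ (P : ℝ) := by
        nth_rw 1 [← ENNReal.rpow_one S]
        rw [← ENNReal.rpow_add_of_nonneg _ _ zero_le_one (sub_nonneg.2 hP1), add_sub_cancel]

lemma eLpNorm_lintegral_le [SFinite μ] [SFinite ν] (hp : 1 ≤ p) {f : α → β → ℝ≥0∞}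
    (hf : Measurable f.uncurry) :
    eLpNorm (fun x => ∫⁻ y, f x y ∂ν) p μ ≤ ∫⁻ y, eLpNorm (fun x => f x y) p μ ∂ν := by
  induction p with
  | top => exact eLpNorm_top_lintegral_le hf
  | coe p => exact eLpNorm_coe_lintegral_le (by exact_mod_cast hp) hf

lemma eLpNorm_rpow {q : ℝ≥0} (hq : q ≠ 0) (f : α → ℝ≥0∞) :
    eLpNorm (fun x => f x ^ (q : ℝ)) (p / q) μ = eLpNorm f p μ ^ (q : ℝ) := by
  have := eLpNorm_enorm_rpow (p := p / q) (μ := μ) f (q := q) (by positivity)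
  simpa [ENNReal.div_mul_cancel (ENNReal.coe_ne_zero.2 hq) ENNReal.coe_ne_top] using this

lemma eLpNorm_eLpNorm_comm_le [SFinite μ] [SFinite ν] (hq : q ≠ 0) (hq_top : q ≠ ∞) (hqp : q ≤ p)
    {f : α → β → ℝ≥0∞} (hf : Measurable f.uncurry) :
    eLpNorm (fun x => eLpNorm (f x) q ν) p μ ≤
      eLpNorm (fun y => eLpNorm (fun x => f x y) p μ) q ν := by
  lift q to ℝ≥0 using hq_top
  have hq0 : q ≠ 0 := by simpa using hq
  rw [← ENNReal.rpow_le_rpow_iff (z := q) (by positivity), ← eLpNorm_rpow hq0,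
    eLpNorm_coe_rpow hq0]
  simp_rw [eLpNorm_coe_rpow hq0, ← eLpNorm_rpow (p := p) hq0]
  refine eLpNorm_lintegral_le ?_ (hf.pow_const _)
  rwa [ENNReal.le_div_iff_mul_le (.inl hq) (.inl ENNReal.coe_ne_top), one_mul]

lemma eLpNorm_eLpNorm_le_eLpNorm_prod [SFinite μ] [SFinite ν] {f : α × β → ℝ≥0∞}
    (hf : Measurable f) :
    eLpNorm (fun y => eLpNorm (fun x => f (x, y)) p μ) p ν ≤ eLpNorm f p (μ.prod ν) := by
  induction p with
  | top =>
    have ae_ae_le : ∀ᵐ y ∂ν, ∀ᵐ x ∂μ, f (x, y) ≤ eLpNorm f ∞ (μ.prod ν) := by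
      refine (Measure.ae_ae_comm (p := fun x y => f (x, y) ≤ eLpNorm f ∞ (μ.prod ν))
        (measurableSet_le hf measurable_const)).1 ?_
      exact Measure.ae_ae_of_ae_prod (ae_le_eLpNorm_top f)
    rw [eLpNorm_top_le_iff]
    filter_upwards [ae_ae_le] with y hy using eLpNorm_top_le_iff.2 hy
  | coe p =>
    rcases eq_or_ne p 0 with rfl | hp
    · simp
    · rw [← ENNReal.rpow_le_rpow_iff (z := p) (by positivity), eLpNorm_coe_rpow hp,
        eLpNorm_coe_rpow hp, lintegral_prod_symm _ (hf.pow_const _).aemeasurable]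
      simp_rw [eLpNorm_coe_rpow hp, le_refl]

lemma eLpNorm_comp_eq {f : β → ℝ≥0∞} (hf : Measurable f) {e : α → β}
    (he : MeasurePreserving e μ ν) : eLpNorm (fun x => f (e x)) p μ = eLpNorm f p ν :=
  eLpNorm_comp_measurePreserving hf.aestronglyMeasurable he

end LpNorms

section Young

variable {α : Type*} [MeasurableSpace α] {μ : Measure α}

lemma eLpNorm_mul_rpow_le_of_le {r Q : ℝ≥0} (hr : 0 < r) (hrQ : r ≤ Q) {k F : α → ℝ≥0∞}
    (hk : Measurable k) (hF : Measurable F) :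
    eLpNorm (fun x => k x * F x ^ (1 - r / Q : ℝ)) r μ ≤
      eLpNorm k Q μ * eLpNorm F r μ ^ (1 - r / Q : ℝ) := by
  have hQ : 0 < Q := hr.trans_le hrQ
  have hr' : (0 : ℝ) < r := hr
  have hQ' : (0 : ℝ) < Q := hQ
  set θ : ℝ := r / Q with hθ
  have hθQ : θ * Q = r := by rw [hθ]; field_simp
  have hθ1 : 0 ≤ 1 - θ := by rw [sub_nonneg, hθ, div_le_one hQ']; exact hrQ
  rw [← ENNReal.rpow_le_rpow_iff hr', eLpNorm_coe_rpow hr.ne']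
  calc ∫⁻ x, (k x * F x ^ (1 - θ)) ^ (r : ℝ) ∂μ
      = ∫⁻ x, (k x ^ (Q : ℝ)) ^ θ * (F x ^ (r : ℝ)) ^ (1 - θ) ∂μ := by
        refine lintegral_congr fun x => ?_
        rw [ENNReal.mul_rpow_of_nonneg _ _ hr'.le, ← ENNReal.rpow_mul, ← ENNReal.rpow_mul,
          ← ENNReal.rpow_mul, mul_comm (Q : ℝ), hθQ, mul_comm (r : ℝ)]
    _ ≤ (∫⁻ x, k x ^ (Q : ℝ) ∂μ) ^ θ * (∫⁻ x, F x ^ (r : ℝ) ∂μ) ^ (1 - θ) :=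
        ENNReal.lintegral_mul_norm_pow_le (hk.pow_const _).aemeasurable
          (hF.pow_const _).aemeasurable (by positivity) hθ1 (by ring)
    _ = (eLpNorm k Q μ * eLpNorm F r μ ^ (1 - θ)) ^ (r : ℝ) := by
        rw [← eLpNorm_coe_rpow hQ.ne', ← eLpNorm_coe_rpow hr.ne',
          ENNReal.mul_rpow_of_nonneg _ _ hr'.le, ← ENNReal.rpow_mul, ← ENNReal.rpow_mul,
          ← ENNReal.rpow_mul, mul_comm (Q : ℝ), hθQ, mul_comm (r : ℝ)]

lemma lintegral_mul_le_eLpNorm_mul_eLpNorm_rpow {q Q r : ℝ≥0} (hqQ : (q : ℝ).HolderConjugate Q)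
    (hr : 0 < r) (hrQ : r ≤ Q) {k F : α → ℝ≥0∞} (hk : Measurable k) (hF : Measurable F) :
    ∫⁻ x, k x * F x ∂μ ≤
      eLpNorm (fun x => k x * F x ^ (1 - r / Q : ℝ)) q μ * eLpNorm F r μ ^ (r / Q : ℝ) := by
  have hq0 : q ≠ 0 := by exact_mod_cast hqQ.ne_zero
  have hQ' : (0 : ℝ) < Q := hqQ.symm.pos
  set θ : ℝ := r / Q with hθ
  have hθQ : θ * Q = r := by rw [hθ]; field_simp
  have hθ1 : 0 ≤ 1 - θ := by rw [sub_nonneg, hθ, div_le_one hQ']; exact hrQ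
  calc ∫⁻ x, k x * F x ∂μ = ∫⁻ x, k x * F x ^ (1 - θ) * F x ^ θ ∂μ := by
        refine lintegral_congr fun x => ?_
        rw [mul_assoc, ← ENNReal.rpow_add_of_nonneg _ _ hθ1 (by positivity), sub_add_cancel,
          ENNReal.rpow_one]
    _ ≤ (∫⁻ x, (k x * F x ^ (1 - θ)) ^ (q : ℝ) ∂μ) ^ (1 / q : ℝ) *
          (∫⁻ x, (F x ^ θ) ^ (Q : ℝ) ∂μ) ^ (1 / Q : ℝ) :=
        ENNReal.lintegral_mul_le_Lp_mul_Lq μ hqQ (hk.mul (hF.pow_const _)).aemeasurable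
          (hF.pow_const _).aemeasurable
    _ = eLpNorm (fun x => k x * F x ^ (1 - θ)) q μ * eLpNorm F r μ ^ θ := by
        simp_rw [← ENNReal.rpow_mul, hθQ]
        rw [← eLpNorm_coe_rpow hq0, ← eLpNorm_coe_rpow hr.ne', ← ENNReal.rpow_mul,
          ← ENNReal.rpow_mul, mul_one_div_cancel (by exact_mod_cast hq0), ENNReal.rpow_one,
          mul_one_div]

variable {G : Type*} [AddGroup G] [MeasurableSpace G] [MeasurableAdd₂ G] {μ : Measure G}
  [SFinite μ] [μ.IsAddRightInvariant]

lemma eLpNorm_lintegral_mul_comp_add_le_of_ne_top [μ.IsAddLeftInvariant] {q r Q : ℝ≥0}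
    (hqQ : (q : ℝ).HolderConjugate Q) (hqr : q ≤ r) (hrQ : r ≤ Q)
    {k : G → G → ℝ≥0∞} (hk : Measurable k.uncurry) {F : G → ℝ≥0∞} (hF : Measurable F) :
    eLpNorm (fun x => ∫⁻ y, k x y * F (x + y) ∂μ) r μ ≤
      eLpNorm (fun y => eLpNorm (fun x => k x y) Q μ) q μ * eLpNorm F r μ := by
  have hq : 0 < q := by exact_mod_cast hqQ.pos
  have hr : 0 < r := hq.trans_le hqr
  have hθ1 : 0 ≤ 1 - (r / Q : ℝ) := by
    rw [sub_nonneg, div_le_one hqQ.symm.pos]; exact hrQ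
  have holder_left (x : G) : ∫⁻ y, k x y * F (x + y) ∂μ ≤ eLpNorm F r μ ^ (r / Q : ℝ) *
      eLpNorm (fun y => k x y * F (x + y) ^ (1 - r / Q : ℝ)) q μ := by
    rw [mul_comm, ← eLpNorm_comp_eq hF (measurePreserving_add_left μ x)]
    exact lintegral_mul_le_eLpNorm_mul_eLpNorm_rpow hqQ hr hrQ hk.of_uncurry_left
      (hF.comp (measurable_const_add x))
  have holder_right (y : G) : eLpNorm (fun x => k x y * F (x + y) ^ (1 - r / Q : ℝ)) r μ ≤
      eLpNorm F r μ ^ (1 - r / Q : ℝ) * eLpNorm (fun x => k x y) Q μ := by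
    rw [mul_comm, ← eLpNorm_comp_eq hF (measurePreserving_add_right μ y)]
    exact eLpNorm_mul_rpow_le_of_le hr hrQ hk.of_uncurry_right (hF.comp (measurable_add_const y))
  have hm : Measurable (Function.uncurry fun x y => k x y * F (x + y) ^ (1 - r / Q : ℝ)) :=
    hk.mul ((hF.comp measurable_add).pow_const _)
  calc eLpNorm (fun x => ∫⁻ y, k x y * F (x + y) ∂μ) r μ
      ≤ eLpNorm (fun x => eLpNorm F r μ ^ (r / Q : ℝ) *
          eLpNorm (fun y => k x y * F (x + y) ^ (1 - r / Q : ℝ)) q μ) r μ :=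
        eLpNorm_mono_ennreal holder_left
    _ = eLpNorm F r μ ^ (r / Q : ℝ) * eLpNorm (fun x =>
          eLpNorm (fun y => k x y * F (x + y) ^ (1 - r / Q : ℝ)) q μ) r μ :=
        eLpNorm_const_mul (measurable_eLpNorm_right hm) _
    _ ≤ eLpNorm F r μ ^ (r / Q : ℝ) * eLpNorm (fun y =>
          eLpNorm (fun x => k x y * F (x + y) ^ (1 - r / Q : ℝ)) r μ) q μ :=
        mul_le_mul_right (eLpNorm_eLpNorm_comm_le (by simpa using hq.ne') ENNReal.coe_ne_top
          (by exact_mod_cast hqr) hm) _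
    _ ≤ eLpNorm F r μ ^ (r / Q : ℝ) * eLpNorm (fun y =>
          eLpNorm F r μ ^ (1 - r / Q : ℝ) * eLpNorm (fun x => k x y) Q μ) q μ :=
        mul_le_mul_right (eLpNorm_mono_ennreal holder_right) _
    _ = eLpNorm (fun y => eLpNorm (fun x => k x y) Q μ) q μ * eLpNorm F r μ := by
        rw [eLpNorm_const_mul (measurable_eLpNorm_left hk), ← mul_assoc,
          ← ENNReal.rpow_add_of_nonneg _ _ (by positivity) hθ1, add_sub_cancel, ENNReal.rpow_one,
          mul_comm]

lemma eLpNorm_lintegral_mul_comp_add_le_of_top {r : ℝ≥0∞} (hr : 1 ≤ r)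
    {k : G → G → ℝ≥0∞} (hk : Measurable k.uncurry) {F : G → ℝ≥0∞} (hF : Measurable F) :
    eLpNorm (fun x => ∫⁻ y, k x y * F (x + y) ∂μ) r μ ≤
      eLpNorm (fun y => eLpNorm (fun x => k x y) ∞ μ) 1 μ * eLpNorm F r μ := by
  have norm_mul_le (y : G) :
      eLpNorm (fun x => k x y * F (x + y)) r μ ≤ eLpNorm (fun x => k x y) ∞ μ * eLpNorm F r μ := by
    have hF_right : Measurable fun x => F (x + y) := hF.comp (measurable_add_const y)
    rw [← eLpNorm_comp_eq hF (measurePreserving_add_right μ y), ← eLpNorm_const_mul hF_right]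
    refine eLpNorm_mono_ennreal_ae ?_
    filter_upwards [ae_le_eLpNorm_top fun x => k x y] with x hx using mul_le_mul_left hx _
  calc eLpNorm (fun x => ∫⁻ y, k x y * F (x + y) ∂μ) r μ
      ≤ ∫⁻ y, eLpNorm (fun x => k x y * F (x + y)) r μ ∂μ :=
        eLpNorm_lintegral_le hr (hk.mul (hF.comp measurable_add))
    _ ≤ ∫⁻ y, eLpNorm (fun x => k x y) ∞ μ * eLpNorm F r μ ∂μ := lintegral_mono norm_mul_le
    _ = eLpNorm (fun y => eLpNorm (fun x => k x y) ∞ μ) 1 μ * eLpNorm F r μ := by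
        rw [lintegral_mul_const _ (measurable_eLpNorm_left hk), eLpNorm_one_eq_lintegral_enorm]
        simp only [enorm_eq_self]

lemma eLpNorm_lintegral_mul_comp_add_le [μ.IsAddLeftInvariant] {q r Q : ℝ≥0∞}
    [hqQ : q.HolderConjugate Q] (hqr : q ≤ r) (hrQ : r ≤ Q) {k : G → G → ℝ≥0∞}
    (hk : Measurable k.uncurry) {F : G → ℝ≥0∞} (hF : Measurable F) :
    eLpNorm (fun x => ∫⁻ y, k x y * F (x + y) ∂μ) r μ ≤
      eLpNorm (fun y => eLpNorm (fun x => k x y) Q μ) q μ * eLpNorm F r μ := by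
  have hr : 1 ≤ r := (ENNReal.HolderConjugate.one_le q Q).trans hqr
  rcases eq_or_ne Q ∞ with rfl | hQ
  · obtain rfl : q = 1 := (ENNReal.HolderConjugate.eq_top_iff_eq_one ∞ q).1 rfl
    exact eLpNorm_lintegral_mul_comp_add_le_of_top hr hk hF
  · lift Q to ℝ≥0 using hQ
    lift r to ℝ≥0 using ne_top_of_le_ne_top ENNReal.coe_ne_top hrQ
    lift q to ℝ≥0 using ne_top_of_le_ne_top ENNReal.coe_ne_top hqr
    exact eLpNorm_lintegral_mul_comp_add_le_of_ne_top
      (NNReal.holderConjugate_coe_iff.2 (ENNReal.holderConjugate_coe_iff.1 hqQ))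
      (by exact_mod_cast hqr) (by exact_mod_cast hrQ) hk hF

end Young

/-- The mixed Lebesgue norm `‖ ‖f(x, y)‖_{L^p(dμ(x))} ‖_{L^q(dν(y))}`: the first variable is
integrated first, as in `modNorm`. -/
def mixedLpNorm {α β : Type*} [MeasurableSpace α] [MeasurableSpace β] (f : α → β → ℝ≥0∞)
    (p q : ℝ≥0∞) (μ : Measure α) (ν : Measure β) : ℝ≥0∞ :=
  eLpNorm (fun y => eLpNorm (fun x => f x y) p μ) q ν

section MixedNorms

variable {α β : Type*} [MeasurableSpace α] [MeasurableSpace β] {μ : Measure α} {ν : Measure β}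
  {p q : ℝ≥0∞}

lemma mixedLpNorm_mono {f g : α → β → ℝ≥0∞} (h : ∀ x y, f x y ≤ g x y) :
    mixedLpNorm f p q μ ν ≤ mixedLpNorm g p q μ ν :=
  eLpNorm_mono_ennreal fun y => eLpNorm_mono_ennreal fun x => h x y

lemma mixedLpNorm_const_mul [SFinite μ] {f : α → β → ℝ≥0∞} (hf : Measurable f.uncurry)
    (c : ℝ≥0∞) : mixedLpNorm (fun x y => c * f x y) p q μ ν = c * mixedLpNorm f p q μ ν := by
  simp only [mixedLpNorm]
  simp_rw [eLpNorm_const_mul hf.of_uncurry_right]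
  exact eLpNorm_const_mul (measurable_eLpNorm_left hf) c

lemma mixedLpNorm_lintegral_le [SFinite μ] [SFinite ν] (hp : 1 ≤ p) (hq : 1 ≤ q)
    {Λ : Type*} [MeasurableSpace Λ] {ρ : Measure Λ} [SFinite ρ] {f : α → β → Λ → ℝ≥0∞}
    (hf : Measurable fun z : α × β × Λ => f z.1 z.2.1 z.2.2) :
    mixedLpNorm (fun x y => ∫⁻ l, f x y l ∂ρ) p q μ ν ≤
      ∫⁻ l, mixedLpNorm (fun x y => f x y l) p q μ ν ∂ρ :=
  calc mixedLpNorm (fun x y => ∫⁻ l, f x y l ∂ρ) p q μ ν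
      ≤ eLpNorm (fun y => ∫⁻ l, eLpNorm (fun x => f x y l) p μ ∂ρ) q ν :=
        eLpNorm_mono_ennreal fun _ => eLpNorm_lintegral_le hp
          (hf.comp (measurable_fst.prodMk (measurable_const.prodMk measurable_snd)))
    _ ≤ ∫⁻ l, mixedLpNorm (fun x y => f x y l) p q μ ν ∂ρ :=
        eLpNorm_lintegral_le hq
          (measurable_eLpNorm_left (f := fun x (z : β × Λ) => f x z.1 z.2) hf)

lemma mixedLpNorm_comp_eq {α' β' : Type*} [MeasurableSpace α'] [MeasurableSpace β']
    {μ' : Measure α'} {ν' : Measure β'} [SFinite μ'] {f : α' → β' → ℝ≥0∞}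
    (hf : Measurable f.uncurry) {e : β → α → α'} (he : ∀ y, MeasurePreserving (e y) μ μ')
    {g : β → β'} (hg : MeasurePreserving g ν ν') :
    mixedLpNorm (fun x y => f (e y x) (g y)) p q μ ν = mixedLpNorm f p q μ' ν' := by
  have inner_norm_eq (y : β) :
      eLpNorm (fun x => f (e y x) (g y)) p μ = eLpNorm (fun x => f x (g y)) p μ' :=
    eLpNorm_comp_eq hf.of_uncurry_right (he y)
  simp_rw [mixedLpNorm, inner_norm_eq]
  exact eLpNorm_comp_eq (measurable_eLpNorm_left hf) hg

variable {G H : Type*} [MeasurableSpace G] [MeasurableSpace H] {μ : Measure G} {ν : Measure H}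
  [SFinite μ] [SFinite ν] {q r s Q : ℝ≥0∞} {K : G × H → G × H → ℝ≥0∞}

lemma mixedLpNorm_eLpNorm_eLpNorm_le (hq : q ≠ 0) (hq_top : q ≠ ∞) (hqQ : q ≤ Q)
    (hK : Measurable K.uncurry) :
    mixedLpNorm (fun ω h => eLpNorm (fun η => eLpNorm (fun x => K (x, ω) (η, h)) Q μ) q μ) Q q ν ν ≤
      mixedLpNorm K Q q (μ.prod ν) (μ.prod ν) := by
  have hK_norm (h : H) : Measurable (Function.uncurry fun (ω : H) (η : G) =>
      eLpNorm (fun x => K (x, ω) (η, h)) Q μ) :=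
    measurable_eLpNorm_left (f := fun x (z : H × G) => K (x, z.1) (z.2, h)) (by fun_prop)
  calc mixedLpNorm (fun ω h => eLpNorm (fun η => eLpNorm (fun x => K (x, ω) (η, h)) Q μ) q μ)
          Q q ν ν
      ≤ eLpNorm (fun h => eLpNorm (fun η => eLpNorm (fun ω =>
          eLpNorm (fun x => K (x, ω) (η, h)) Q μ) Q ν) q μ) q ν :=
        eLpNorm_mono_ennreal fun h => eLpNorm_eLpNorm_comm_le
          (f := fun ω η => eLpNorm (fun x => K (x, ω) (η, h)) Q μ) hq hq_top hqQ (hK_norm h)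
    _ ≤ eLpNorm (fun h => eLpNorm (fun η => eLpNorm (fun z => K z (η, h)) Q (μ.prod ν)) q μ) q ν :=
        eLpNorm_mono_ennreal fun h => eLpNorm_mono_ennreal fun η =>
          eLpNorm_eLpNorm_le_eLpNorm_prod (f := fun z => K z (η, h)) hK.of_uncurry_right
    _ ≤ mixedLpNorm K Q q (μ.prod ν) (μ.prod ν) :=
        eLpNorm_eLpNorm_le_eLpNorm_prod (f := fun w => eLpNorm (fun z => K z w) Q (μ.prod ν))
          (measurable_eLpNorm_left hK)

variable [AddGroup G] [AddGroup H] [MeasurableAdd₂ G] [MeasurableAdd₂ H]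
  [μ.IsAddLeftInvariant] [μ.IsAddRightInvariant]

lemma eLpNorm_lintegral_lintegral_mul_comp_add_le [q.HolderConjugate Q] (hqr : q ≤ r) (hrQ : r ≤ Q)
    (hK : Measurable K.uncurry) {F : G → H → ℝ≥0∞} (hF : Measurable F.uncurry) (ω : H) :
    eLpNorm (fun x => ∫⁻ h, ∫⁻ η, K (x, ω) (η, h) * F (x + η) (ω + h) ∂μ ∂ν) r μ ≤
      ∫⁻ h, eLpNorm (fun η => eLpNorm (fun x => K (x, ω) (η, h)) Q μ) q μ *
        eLpNorm (fun u => F u (ω + h)) r μ ∂ν := by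
  have hr : 1 ≤ r := (ENNReal.HolderConjugate.one_le q Q).trans hqr
  have hm : Measurable fun z : (G × H) × G =>
      K (z.1.1, ω) (z.2, z.1.2) * F (z.1.1 + z.2) (ω + z.1.2) := by
    fun_prop
  calc eLpNorm (fun x => ∫⁻ h, ∫⁻ η, K (x, ω) (η, h) * F (x + η) (ω + h) ∂μ ∂ν) r μ
      ≤ ∫⁻ h, eLpNorm (fun x => ∫⁻ η, K (x, ω) (η, h) * F (x + η) (ω + h) ∂μ) r μ ∂ν :=
        eLpNorm_lintegral_le hr hm.lintegral_prod_right
    _ ≤ ∫⁻ h, eLpNorm (fun η => eLpNorm (fun x => K (x, ω) (η, h)) Q μ) q μ *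
          eLpNorm (fun u => F u (ω + h)) r μ ∂ν :=
        lintegral_mono fun h => eLpNorm_lintegral_mul_comp_add_le
          (k := fun x η => K (x, ω) (η, h)) (F := fun u => F u (ω + h)) hqr hrQ
          (by fun_prop) (by fun_prop)

theorem mixedLpNorm_lintegral_mul_comp_add_le [ν.IsAddLeftInvariant] [ν.IsAddRightInvariant]
    [q.HolderConjugate Q] (hq_top : q ≠ ∞) (hqr : q ≤ r) (hrQ : r ≤ Q) (hqs : q ≤ s) (hsQ : s ≤ Q)
    (hK : Measurable K.uncurry) {F : G → H → ℝ≥0∞} (hF : Measurable F.uncurry) :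
    mixedLpNorm (fun x ω => ∫⁻ h, ∫⁻ η, K (x, ω) (η, h) * F (x + η) (ω + h) ∂μ ∂ν) r s μ ν ≤
      mixedLpNorm K Q q (μ.prod ν) (μ.prod ν) * mixedLpNorm F r s μ ν := by
  have hq : q ≠ 0 := ENNReal.HolderConjugate.ne_zero q Q
  have hK_norm : Measurable (Function.uncurry fun (ω h : H) =>
      eLpNorm (fun η => eLpNorm (fun x => K (x, ω) (η, h)) Q μ) q μ) :=
    measurable_eLpNorm_left (f := fun η (z : H × H) => eLpNorm (fun x => K (x, z.1) (η, z.2)) Q μ)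
      (measurable_eLpNorm_left (f := fun x (z : G × H × H) => K (x, z.2.1) (z.1, z.2.2))
        (by fun_prop))
  calc mixedLpNorm (fun x ω => ∫⁻ h, ∫⁻ η, K (x, ω) (η, h) * F (x + η) (ω + h) ∂μ ∂ν) r s μ ν
      ≤ eLpNorm (fun ω => ∫⁻ h, eLpNorm (fun η => eLpNorm (fun x => K (x, ω) (η, h)) Q μ) q μ *
          eLpNorm (fun u => F u (ω + h)) r μ ∂ν) s ν :=
        eLpNorm_mono_ennreal (eLpNorm_lintegral_lintegral_mul_comp_add_le hqr hrQ hK hF)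
    _ ≤ mixedLpNorm (fun ω h => eLpNorm (fun η => eLpNorm (fun x => K (x, ω) (η, h)) Q μ) q μ)
          Q q ν ν * mixedLpNorm F r s μ ν :=
        eLpNorm_lintegral_mul_comp_add_le (F := fun ω => eLpNorm (fun u => F u ω) r μ)
          hqs hsQ hK_norm (measurable_eLpNorm_left hF)
    _ ≤ mixedLpNorm K Q q (μ.prod ν) (μ.prod ν) * mixedLpNorm F r s μ ν :=
        mul_le_mul_left (mixedLpNorm_eLpNorm_eLpNorm_le hq hq_top (hqr.trans hrQ) hK) _

end MixedNorms

section Embedding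

variable {α : Type*} [MeasurableSpace α] {μ : Measure α} {p q Q : ℝ≥0∞}

lemma eLpNorm_le_of_ae_le_of_eLpNorm_le (hp : p ≠ 0) (hpQ : p ≤ Q) {f : α → ℝ≥0∞}
    (hf : Measurable f) {M : ℝ≥0∞} (h_sup : ∀ᵐ x ∂μ, f x ≤ M) (h_norm : eLpNorm f p μ ≤ M) :
    eLpNorm f Q μ ≤ M := by
  induction Q with
  | top => exact eLpNorm_top_le_iff.2 h_sup
  | coe Q =>
    lift p to ℝ≥0 using ne_top_of_le_ne_top ENNReal.coe_ne_top hpQ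
    have hp0 : p ≠ 0 := by simpa using hp
    have hpQ' : p ≤ Q := by exact_mod_cast hpQ
    have hQ : 0 < Q := hp0.bot_lt.trans_le hpQ'
    have rpow_split (c : ℝ≥0∞) : c ^ (Q : ℝ) = c ^ (p : ℝ) * c ^ (Q - p : ℝ) := by
      rw [← ENNReal.rpow_add_of_nonneg _ _ p.coe_nonneg (sub_nonneg.2 (by exact_mod_cast hpQ')),
        add_sub_cancel]
    rw [← ENNReal.rpow_le_rpow_iff (z := Q) (by positivity), eLpNorm_coe_rpow hQ.ne']
    calc ∫⁻ x, f x ^ (Q : ℝ) ∂μ ≤ ∫⁻ x, f x ^ (p : ℝ) * M ^ (Q - p : ℝ) ∂μ := by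
          refine lintegral_mono_ae ?_
          filter_upwards [h_sup] with x hx
          rw [rpow_split]
          gcongr
          simpa using hpQ'
      _ = eLpNorm f p μ ^ (p : ℝ) * M ^ (Q - p : ℝ) := by
          rw [lintegral_mul_const _ (hf.pow_const _), eLpNorm_coe_rpow hp0]
      _ ≤ M ^ (Q : ℝ) := by
          rw [rpow_split]
          gcongr

lemma lintegral_mul_le_max_one_mul_eLpNorm (hp : 1 ≤ p) {ρ A : α → ℝ≥0∞} (hρ : Measurable ρ)
    (hρ_le : ∀ x, ρ x ≤ 1) (hA : Measurable A) :
    ∫⁻ x, ρ x * A x ∂μ ≤ max 1 (∫⁻ x, ρ x ∂μ) * eLpNorm A p μ := by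
  have withDensity_le : μ.withDensity ρ ≤ μ :=
    (withDensity_mono (ae_of_all _ hρ_le)).trans_eq (withDensity_one (μ := μ))
  have exponent_nonneg : 0 ≤ 1 / (1 : ℝ≥0∞).toReal - 1 / p.toReal := by
    induction p with
    | top => simp
    | coe p =>
      have hp' : (1 : ℝ) ≤ p := by exact_mod_cast hp
      simpa using inv_le_one_of_one_le₀ hp'
  have exponent_le : 1 / (1 : ℝ≥0∞).toReal - 1 / p.toReal ≤ 1 := by simp
  calc ∫⁻ x, ρ x * A x ∂μ = eLpNorm A 1 (μ.withDensity ρ) := by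
        simp [eLpNorm_one_eq_lintegral_enorm, lintegral_withDensity_eq_lintegral_mul _ hρ hA]
    _ ≤ eLpNorm A p (μ.withDensity ρ) *
          (∫⁻ x, ρ x ∂μ) ^ (1 / (1 : ℝ≥0∞).toReal - 1 / p.toReal) := by
        simpa using eLpNorm_le_eLpNorm_mul_rpow_measure_univ (μ := μ.withDensity ρ) hp
          hA.aestronglyMeasurable
    _ ≤ eLpNorm A p μ * max 1 (∫⁻ x, ρ x ∂μ) := by
        refine mul_le_mul' (eLpNorm_mono_measure A withDensity_le)
          ((ENNReal.rpow_le_rpow (le_max_right 1 _) exponent_nonneg).trans ?_)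
        simpa using ENNReal.rpow_le_rpow_of_exponent_le (le_max_left 1 _) exponent_le
    _ = max 1 (∫⁻ x, ρ x ∂μ) * eLpNorm A p μ := mul_comm _ _

variable {G : Type*} [AddGroup G] [MeasurableSpace G] [MeasurableAdd₂ G] {μ : Measure G}
  [SFinite μ] [μ.IsAddRightInvariant]

lemma eLpNorm_lintegral_mul_comp_add_le_of_le_one [μ.IsAddLeftInvariant] (hp : 1 ≤ p)
    (hpQ : p ≤ Q) {ρ A : G → ℝ≥0∞} (hρ : Measurable ρ) (hρ_le : ∀ y, ρ y ≤ 1)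
    (hA : Measurable A) :
    eLpNorm (fun x => ∫⁻ y, ρ y * A (x + y) ∂μ) Q μ ≤
      max 1 (∫⁻ y, ρ y ∂μ) * eLpNorm A p μ := by
  have hm : Measurable (Function.uncurry fun x y => ρ y * A (x + y)) := by fun_prop
  refine eLpNorm_le_of_ae_le_of_eLpNorm_le (zero_lt_one.trans_le hp).ne' hpQ
    hm.lintegral_prod_right (ae_of_all _ fun x => ?_) ?_
  · rw [← eLpNorm_comp_eq hA (measurePreserving_add_left μ x)]
    exact lintegral_mul_le_max_one_mul_eLpNorm hp hρ hρ_le (by fun_prop)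
  · calc eLpNorm (fun x => ∫⁻ y, ρ y * A (x + y) ∂μ) p μ
        ≤ ∫⁻ y, eLpNorm (fun x => ρ y * A (x + y)) p μ ∂μ := eLpNorm_lintegral_le hp hm
      _ = (∫⁻ y, ρ y ∂μ) * eLpNorm A p μ := by
          rw [← lintegral_mul_const _ hρ]
          refine lintegral_congr fun y => ?_
          rw [eLpNorm_const_mul (by fun_prop), eLpNorm_comp_eq hA (measurePreserving_add_right μ y)]
      _ ≤ max 1 (∫⁻ y, ρ y ∂μ) * eLpNorm A p μ := by gcongr; exact le_max_right _ _

variable {H : Type*} [MeasurableSpace H] {ν : Measure H} {A : G → H → ℝ≥0∞}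

lemma mixedLpNorm_lintegral_mul_comp_add_le_of_le_one [μ.IsAddLeftInvariant] (hp : 1 ≤ p)
    (hpQ : p ≤ Q) {ρ : G → ℝ≥0∞} (hρ : Measurable ρ) (hρ_le : ∀ y, ρ y ≤ 1)
    (hA : Measurable A.uncurry) :
    mixedLpNorm (fun x ω => ∫⁻ y, ρ y * A (x + y) ω ∂μ) Q q μ ν ≤
      max 1 (∫⁻ y, ρ y ∂μ) * mixedLpNorm A p q μ ν :=
  calc mixedLpNorm (fun x ω => ∫⁻ y, ρ y * A (x + y) ω ∂μ) Q q μ ν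
      ≤ eLpNorm (fun ω => max 1 (∫⁻ y, ρ y ∂μ) * eLpNorm (fun x => A x ω) p μ) q ν :=
        eLpNorm_mono_ennreal fun ω => eLpNorm_lintegral_mul_comp_add_le_of_le_one
          (A := fun x => A x ω) hp hpQ hρ hρ_le (by fun_prop)
    _ = max 1 (∫⁻ y, ρ y ∂μ) * mixedLpNorm A p q μ ν :=
        eLpNorm_const_mul (measurable_eLpNorm_left hA) _

variable [AddGroup H] [MeasurableAdd₂ H] [MeasurableSub₂ H] [SFinite ν] [ν.IsAddRightInvariant]

lemma mixedLpNorm_lintegral_mul_translate_le (hp : 1 ≤ p) (hq : 1 ≤ q) {Λ : Type*}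
    [MeasurableSpace Λ] {ρ : Measure Λ} [SFinite ρ] {c : Λ → ℝ≥0∞} (hc : Measurable c)
    {y : Λ → G} (hy : Measurable y) {θ : Λ → H} (hθ : Measurable θ) (hA : Measurable A.uncurry) :
    mixedLpNorm (fun x ω => ∫⁻ l, c l * A (x + y l) (ω - θ l) ∂ρ) p q μ ν ≤
      (∫⁻ l, c l ∂ρ) * mixedLpNorm A p q μ ν :=
  calc mixedLpNorm (fun x ω => ∫⁻ l, c l * A (x + y l) (ω - θ l) ∂ρ) p q μ ν
      ≤ ∫⁻ l, mixedLpNorm (fun x ω => c l * A (x + y l) (ω - θ l)) p q μ ν ∂ρ :=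
        mixedLpNorm_lintegral_le hp hq (by fun_prop)
    _ = ∫⁻ l, c l * mixedLpNorm A p q μ ν ∂ρ := by
        refine lintegral_congr fun l => ?_
        rw [mixedLpNorm_const_mul (f := fun x ω => A (x + y l) (ω - θ l)) (by fun_prop),
          mixedLpNorm_comp_eq hA (fun _ => measurePreserving_add_right μ (y l))
            (measurePreserving_sub_right ν (θ l))]
    _ = (∫⁻ l, c l ∂ρ) * mixedLpNorm A p q μ ν := lintegral_mul_const _ hc

lemma mixedLpNorm_le_of_le_lintegral_translate [μ.IsAddLeftInvariant] (hp : 1 ≤ p)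
    (hpQ : p ≤ Q) (hq : 1 ≤ q) {ρ : G → ℝ≥0∞} (hρ : Measurable ρ) (hρ_le : ∀ y, ρ y ≤ 1)
    {σ : H → ℝ≥0∞} (hσ : Measurable σ) (hA : Measurable A.uncurry)
    (h_le : ∀ x ω, A x ω ≤ ∫⁻ θ, σ θ * ∫⁻ y, ρ y * A (x + y) (ω - θ) ∂μ ∂ν) :
    mixedLpNorm A Q q μ ν ≤
      (∫⁻ θ, σ θ ∂ν) * max 1 (∫⁻ y, ρ y ∂μ) * mixedLpNorm A p q μ ν := by
  have hm : Measurable fun z : (G × H) × G => ρ z.2 * A (z.1.1 + z.2) z.1.2 := by fun_prop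
  calc mixedLpNorm A Q q μ ν
      ≤ mixedLpNorm (fun x ω => ∫⁻ θ, σ θ * ∫⁻ y, ρ y * A (x + y) (ω - θ) ∂μ ∂ν) Q q μ ν :=
        mixedLpNorm_mono h_le
    _ ≤ (∫⁻ θ, σ θ ∂ν) * mixedLpNorm (fun x ω => ∫⁻ y, ρ y * A (x + y) ω ∂μ) Q q μ ν := by
        simpa only [add_zero, id_eq] using mixedLpNorm_lintegral_mul_translate_le (y := fun _ => 0)
          (A := fun x ω => ∫⁻ y, ρ y * A (x + y) ω ∂μ) (hp.trans hpQ) hq hσ measurable_const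
          measurable_id hm.lintegral_prod_right
    _ ≤ (∫⁻ θ, σ θ ∂ν) * (max 1 (∫⁻ y, ρ y ∂μ) * mixedLpNorm A p q μ ν) :=
        mul_le_mul_right (mixedLpNorm_lintegral_mul_comp_add_le_of_le_one hp hpQ hρ hρ_le hA) _
    _ = (∫⁻ θ, σ θ ∂ν) * max 1 (∫⁻ y, ρ y ∂μ) * mixedLpNorm A p q μ ν := (mul_assoc _ _ _).symm

end Embedding

section FourierChar

lemma enorm_coe_circle (z : Circle) : ‖(z : ℂ)‖ₑ = 1 := by
  rw [← ofReal_norm, Circle.norm_coe, ENNReal.ofReal_one]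

lemma coe_fourierChar_add (x y : ℝ) : (𝐞 (x + y) : ℂ) = 𝐞 x * 𝐞 y := by
  rw [AddChar.map_add_eq_mul, Circle.coe_mul]

lemma fourierChar_eq_cexp (x : ℝ) : (𝐞 x : ℂ) = cexp (I * (2 * Real.pi * x)) := by
  rw [Real.fourierChar_apply]
  push_cast
  ring_nf

end FourierChar

section Gaussian

variable {ι : Type*} [Fintype ι]

local notation "E" => EuclideanSpace ℝ ι

lemma conj_gaussWin (t : E) : (starRingEnd ℂ) (gaussWin t) = gaussWin t := by
  simp [gaussWin, ← Complex.exp_conj]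

lemma continuous_gaussWin : Continuous (gaussWin : E → ℂ) := by
  unfold gaussWin
  fun_prop

@[fun_prop]
lemma measurable_gaussWin : Measurable (gaussWin : E → ℂ) :=
  continuous_gaussWin.measurable

lemma norm_gaussWin_le_one (t : E) : ‖gaussWin t‖ ≤ 1 := by
  rw [gaussWin, Complex.norm_exp]
  exact_mod_cast Real.exp_le_one_iff.2 (neg_nonpos.2 (by positivity))

lemma integrable_gaussWin : Integrable (gaussWin : E → ℂ) := by
  refine (GaussianFourier.integrable_cexp_neg_mul_sq_norm_add (V := E) (b := Real.pi)
    (by simpa using Real.pi_pos) 0 0).congr (ae_of_all _ fun t => ?_)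
  simp [gaussWin]

lemma integrable_gaussWin_pow (n : ℕ) : Integrable fun t : E => gaussWin t ^ (n + 1) := by
  simp only [pow_succ']
  refine integrable_gaussWin.mul_bdd (c := 1) (by fun_prop) (ae_of_all _ fun t => ?_)
  simpa only [norm_pow] using pow_le_one₀ (norm_nonneg _) (norm_gaussWin_le_one t)

lemma integral_gaussWin_mul_fourierChar (w : E) :
    ∫ v : E, gaussWin v * 𝐞 (inner ℝ v w) = gaussWin w := by
  have h := fourier_gaussian_innerProductSpace (V := E) (b := Real.pi) (by simpa using Real.pi_pos)
    (-w)
  rw [Real.fourier_eq] at h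
  simp only [inner_neg_right, neg_neg, norm_neg, Circle.smul_def, smul_eq_mul] at h
  have hpi : (Real.pi : ℂ) ≠ 0 := by exact_mod_cast Real.pi_ne_zero
  calc ∫ v : E, gaussWin v * 𝐞 (inner ℝ v w)
      = ∫ v : E, (𝐞 (inner ℝ v w) : ℂ) * cexp (-Real.pi * ‖v‖ ^ 2) := by
        simp only [gaussWin, neg_mul, mul_comm]
    _ = gaussWin w := by
        rw [h, gaussWin, div_self hpi, one_cpow, one_mul]
        congr 1
        field_simp

lemma gaussWin_sq_mul_gaussWin_sub_sq (t y : E) :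
    gaussWin y ^ 2 * gaussWin (t - y) ^ 2 = gaussWin t * gaussWin ((2 : ℝ) • y - t) := by
  have parallelogram : 2 * ‖y‖ ^ 2 + 2 * ‖t - y‖ ^ 2 = ‖t‖ ^ 2 + ‖(2 : ℝ) • y - t‖ ^ 2 := by
    have h := parallelogram_law_with_norm ℝ y (t - y)
    rw [add_sub_cancel, show y - (t - y) = (2 : ℝ) • y - t by module] at h
    linear_combination -h
  simp only [gaussWin, ← Complex.exp_nat_mul, ← Complex.exp_add]
  have parallelogram' := congrArg (fun r : ℝ => (r : ℂ)) parallelogram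
  push_cast at parallelogram' ⊢
  congr 1
  linear_combination -(Real.pi : ℂ) * parallelogram'

lemma integral_gaussWin_pow_three_ne_zero : ∫ v : E, gaussWin v ^ 3 ≠ 0 := by
  have hb : 0 < (3 * Real.pi : ℂ).re := by simpa using Real.pi_pos
  have hpi : (Real.pi : ℂ) ≠ 0 := by exact_mod_cast Real.pi_ne_zero
  have gaussWin_pow (v : E) : gaussWin v ^ 3 = cexp (-(3 * Real.pi) * ‖v‖ ^ 2) := by
    rw [gaussWin, ← Complex.exp_nat_mul]
    push_cast
    ring_nf
  simp only [gaussWin_pow, GaussianFourier.integral_cexp_neg_mul_sq_norm hb]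
  simp [hpi]

lemma integral_comp_two_smul_sub (g : E → ℂ) (t : E) :
    (2 : ℂ) ^ Fintype.card ι * ∫ y : E, g ((2 : ℝ) • y - t) = ∫ u, g u := by
  have h := Measure.integral_comp_smul (volume : Measure E) (fun y => g (y - t)) 2
  rw [integral_sub_right_eq_self (f := g), finrank_euclideanSpace] at h
  rw [h, abs_of_nonneg (by positivity), Complex.real_smul]
  push_cast
  field_simp

/-- The coefficients of the expansion of the chirped Gaussian `G(t) G(τ) exp(2πi t·τ)` into
time-frequency shifts, by `l.1` in time and by `l.2` in frequency, of `G` in the variable `t`. They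
come from `G(y)² G(t - y)² = G(t) G(2y - t)`, with one factor `G(t - y)` written as the Fourier
transform of `G`. -/
def gaussCoeff (l : E × E) : ℂ :=
  2 ^ Fintype.card ι * (gaussWin l.1 ^ 2 * gaussWin l.2) * 𝐞 (-inner ℝ l.2 l.1)

@[fun_prop]
lemma measurable_gaussCoeff : Measurable (gaussCoeff : E × E → ℂ) := by
  unfold gaussCoeff
  fun_prop

lemma integrable_gaussCoeff : Integrable (gaussCoeff : E × E → ℂ) :=
  (((integrable_gaussWin_pow 1).mul_prod integrable_gaussWin).const_mul _).mul_bdd (c := 1)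
    (by fun_prop) (ae_of_all _ fun _ => (Circle.norm_coe _).le)

lemma integral_gaussCoeff_mul (t τ : E) :
    ∫ l : E × E, gaussCoeff l * (gaussWin (t - l.1) * 𝐞 (inner ℝ l.2 t + 2 * inner ℝ l.1 τ)) =
      gaussWin t * gaussWin τ * 𝐞 (inner ℝ t τ) := by
  have h_int : Integrable fun l : E × E =>
      gaussCoeff l * (gaussWin (t - l.1) * 𝐞 (inner ℝ l.2 t + 2 * inner ℝ l.1 τ)) :=
    integrable_gaussCoeff.mul_bdd (c := 1) (by fun_prop) (ae_of_all _ fun l => by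
      simpa only [norm_mul, Circle.norm_coe, mul_one] using norm_gaussWin_le_one (t - l.1))
  have inner_integral (y : E) : ∫ θ : E,
      gaussCoeff (y, θ) * (gaussWin (t - y) * 𝐞 (inner ℝ θ t + 2 * inner ℝ y τ)) =
      2 ^ Fintype.card ι * (gaussWin t *
        (gaussWin ((2 : ℝ) • y - t) * 𝐞 (inner ℝ ((2 : ℝ) • y - t + t) τ))) :=
    calc _ = ∫ θ : E, 2 ^ Fintype.card ι * (gaussWin y ^ 2 * gaussWin (t - y)) *
            𝐞 (2 * inner ℝ y τ) * (gaussWin θ * 𝐞 (inner ℝ θ (t - y))) := by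
          congr with θ
          rw [gaussCoeff, inner_sub_right, sub_eq_add_neg (inner ℝ θ t), coe_fourierChar_add,
            coe_fourierChar_add]
          ring
      _ = _ := by
          rw [integral_const_mul, integral_gaussWin_mul_fourierChar, sub_add_cancel,
            real_inner_smul_left]
          linear_combination 2 ^ Fintype.card ι * (𝐞 (2 * inner ℝ y τ) : ℂ) *
            gaussWin_sq_mul_gaussWin_sub_sq t y
  calc _ = gaussWin t * ∫ u : E, gaussWin u * 𝐞 (inner ℝ (u + t) τ) := by
        rw [Measure.volume_eq_prod, integral_prod _ h_int]
        simp only [inner_integral]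
        rw [integral_const_mul, integral_const_mul, mul_left_comm,
          integral_comp_two_smul_sub fun u => gaussWin u * (𝐞 (inner ℝ (u + t) τ) : ℂ)]
    _ = gaussWin t * gaussWin τ * 𝐞 (inner ℝ t τ) := by
        simp only [inner_add_left, coe_fourierChar_add, ← mul_assoc]
        rw [integral_mul_const, integral_gaussWin_mul_fourierChar, mul_assoc]

end Gaussian

section WindowSTFT

variable {E : Type*} [NormedAddCommGroup E] [InnerProductSpace ℝ E] [FiniteDimensional ℝ E]
  [MeasurableSpace E] [BorelSpace E]

/-- The short-time Fourier transform of `F` with respect to an arbitrary window `Φ`, which enters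
without complex conjugation. -/
def windowSTFT (Φ F : E → ℂ) (x ω : E) : ℂ :=
  ∫ t, F t * Φ (t - x) * 𝐞 (-inner ℝ ω t)

lemma STFT_eq_windowSTFT {ι : Type*} [Fintype ι] (F : EuclideanSpace ℝ ι → ℂ) :
    STFT F = windowSTFT gaussWin F := by
  ext x ω
  simp only [STFT, windowSTFT, conj_gaussWin, fourierChar_eq_cexp, ofReal_neg, mul_neg]

lemma measurable_windowSTFT {Φ F : E → ℂ} (hΦ : Measurable Φ) (hF : AEStronglyMeasurable F) :
    Measurable (windowSTFT Φ F).uncurry := by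
  have windowSTFT_mk (z : E × E) : (windowSTFT Φ F).uncurry z =
      ∫ t, hF.mk F t * Φ (t - z.1) * 𝐞 (-inner ℝ z.2 t) :=
    integral_congr_ae (hF.ae_eq_mk.mono fun t ht => by simp only [ht])
  have hm : Measurable fun z : (E × E) × E =>
      hF.mk F z.2 * Φ (z.2 - z.1.1) * 𝐞 (-inner ℝ z.1.2 z.2) := by fun_prop
  simpa only [funext windowSTFT_mk] using hm.stronglyMeasurable.integral_prod_right.measurable

variable {Λ : Type*} [MeasurableSpace Λ] {ρ : Measure Λ} [SFinite ρ] {c : Λ → ℂ} {y θ : Λ → E}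
  {g Φ F : E → ℂ}

lemma windowSTFT_eq_integral_translate (hc : Integrable c ρ) (hy : Measurable y)
    (hθ : Measurable θ) (hg : Measurable g) {M : ℝ} (hgM : ∀ t, ‖g t‖ ≤ M)
    (hΦ : ∀ t, Φ t = ∫ l, c l * (g (t - y l) * 𝐞 (inner ℝ (θ l) t)) ∂ρ) (hF : Integrable F)
    (x ω : E) :
    windowSTFT Φ F x ω =
      ∫ l, c l * 𝐞 (-inner ℝ (θ l) x) * windowSTFT g F (x + y l) (ω - θ l) ∂ρ := by
  have h_int : Integrable (fun z : E × Λ => F z.1 * c z.2 *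
      (g (z.1 - x - y z.2) * 𝐞 (inner ℝ (θ z.2) (z.1 - x)) * 𝐞 (-inner ℝ ω z.1)))
      (volume.prod ρ) :=
    (hF.mul_prod hc).mul_bdd (c := M) (by fun_prop) (ae_of_all _ fun z => by
      simpa only [norm_mul, Circle.norm_coe, mul_one] using hgM _)
  calc windowSTFT Φ F x ω
      = ∫ t, ∫ l, F t * c l *
          (g (t - x - y l) * 𝐞 (inner ℝ (θ l) (t - x)) * 𝐞 (-inner ℝ ω t)) ∂ρ := by
        simp only [windowSTFT, hΦ, ← integral_const_mul, ← integral_mul_const]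
        congr! 4
        ring
    _ = ∫ l, (∫ t, F t * c l *
          (g (t - x - y l) * 𝐞 (inner ℝ (θ l) (t - x)) * 𝐞 (-inner ℝ ω t))) ∂ρ :=
        integral_integral_swap h_int
    _ = ∫ l, c l * 𝐞 (-inner ℝ (θ l) x) * windowSTFT g F (x + y l) (ω - θ l) ∂ρ := by
        simp only [windowSTFT, ← integral_const_mul]
        congr! 4 with l
        rw [inner_sub_right, inner_sub_left, sub_add_eq_sub_sub, neg_sub,
          sub_eq_add_neg (inner ℝ _ _) (inner ℝ _ x), sub_eq_add_neg (inner ℝ _ _) (inner ℝ ω _),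
          coe_fourierChar_add, coe_fourierChar_add]
        ring

lemma enorm_windowSTFT_le_lintegral_translate (hc : Integrable c ρ) (hy : Measurable y)
    (hθ : Measurable θ) (hg : Measurable g) {M : ℝ} (hgM : ∀ t, ‖g t‖ ≤ M)
    (hΦ : ∀ t, Φ t = ∫ l, c l * (g (t - y l) * 𝐞 (inner ℝ (θ l) t)) ∂ρ) (hF : Integrable F)
    (x ω : E) :
    ‖windowSTFT Φ F x ω‖ₑ ≤ ∫⁻ l, ‖c l‖ₑ * ‖windowSTFT g F (x + y l) (ω - θ l)‖ₑ ∂ρ := by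
  rw [windowSTFT_eq_integral_translate hc hy hθ hg hgM hΦ hF]
  refine (enorm_integral_le_lintegral_enorm _).trans_eq ?_
  simp only [enorm_mul, enorm_coe_circle, mul_one]

lemma modNorm_eq_mixedLpNorm {p q : ℝ≥0∞} (hp : p ≠ 0) (hq : q ≠ 0) {ι : Type*} [Fintype ι]
    (F : EuclideanSpace ℝ ι → ℂ) :
    modNorm p q F = mixedLpNorm (fun x ω => ‖STFT F x ω‖ₑ) p q volume volume := by
  rw [modNorm, lqNorm_eq_eLpNorm hq, mixedLpNorm]
  simp_rw [lqNorm_eq_eLpNorm hp]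
  rfl

end WindowSTFT

section ChangeOfExponent

variable {ι : Type*} [Fintype ι] {F : EuclideanSpace ℝ ι → ℂ}

lemma measurable_STFT (hF : Integrable F) : Measurable (STFT F).uncurry :=
  STFT_eq_windowSTFT F ▸ measurable_windowSTFT measurable_gaussWin hF.aestronglyMeasurable

lemma gaussWin_eq_integral_gaussCoeff_mul (t : EuclideanSpace ℝ ι) :
    gaussWin t = ∫ l, gaussCoeff l * (gaussWin (t - l.1) * 𝐞 (inner ℝ l.2 t)) := by
  simpa [gaussWin] using (integral_gaussCoeff_mul t 0).symm

lemma enorm_gaussCoeff (y θ : EuclideanSpace ℝ ι) :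
    ‖gaussCoeff (y, θ)‖ₑ = 2 ^ Fintype.card ι * ‖gaussWin θ‖ₑ * ‖gaussWin y ^ 2‖ₑ := by
  rw [gaussCoeff, enorm_mul, enorm_coe_circle, mul_one, enorm_mul, enorm_mul, enorm_pow,
    ← ofReal_norm (2 : ℂ), Complex.norm_ofNat, ENNReal.ofReal_ofNat]
  ring

lemma enorm_STFT_le_lintegral_translate (hF : Integrable F) (x ω : EuclideanSpace ℝ ι) :
    ‖STFT F x ω‖ₑ ≤ ∫⁻ θ, 2 ^ Fintype.card ι * ‖gaussWin θ‖ₑ *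
      ∫⁻ y, ‖gaussWin y ^ 2‖ₑ * ‖STFT F (x + y) (ω - θ)‖ₑ := by
  have hSTFT := measurable_STFT hF
  have hm : Measurable fun l : EuclideanSpace ℝ ι × EuclideanSpace ℝ ι =>
      ‖gaussCoeff l‖ₑ * ‖STFT F (x + l.1) (ω - l.2)‖ₑ := by fun_prop
  calc ‖STFT F x ω‖ₑ
      ≤ ∫⁻ l, ‖gaussCoeff l‖ₑ * ‖STFT F (x + l.1) (ω - l.2)‖ₑ := by
        rw [STFT_eq_windowSTFT F]
        exact enorm_windowSTFT_le_lintegral_translate (F := F) (Φ := gaussWin)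
          (c := gaussCoeff) (y := Prod.fst) (θ := Prod.snd) integrable_gaussCoeff measurable_fst
          measurable_snd measurable_gaussWin norm_gaussWin_le_one
          gaussWin_eq_integral_gaussCoeff_mul hF x ω
    _ = _ := by
        rw [Measure.volume_eq_prod, lintegral_prod_symm' _ hm]
        refine lintegral_congr fun θ => ?_
        rw [← lintegral_const_mul _ (by fun_prop)]
        simp only [enorm_gaussCoeff, mul_assoc]

lemma exists_modNorm_le_of_le (ι : Type*) [Fintype ι] :
    ∃ C : ℝ≥0∞, C ≠ ∞ ∧ ∀ {p Q q : ℝ≥0∞} {F : EuclideanSpace ℝ ι → ℂ},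
      1 ≤ p → p ≤ Q → 1 ≤ q → Integrable F → modNorm Q q F ≤ C * modNorm p q F := by
  refine ⟨(∫⁻ θ : EuclideanSpace ℝ ι, 2 ^ Fintype.card ι * ‖gaussWin θ‖ₑ) *
    max 1 (∫⁻ y : EuclideanSpace ℝ ι, ‖gaussWin y ^ 2‖ₑ), ?_, fun {p Q q F} hp hpQ hq hF => ?_⟩
  · rw [lintegral_const_mul _ (by fun_prop)]
    exact mul_ne_top (mul_ne_top (by simp) integrable_gaussWin.2.ne)
      (max_lt one_lt_top (integrable_gaussWin_pow 1).2).ne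
  · have hSTFT := measurable_STFT hF
    have ne_zero {s : ℝ≥0∞} (hs : 1 ≤ s) : s ≠ 0 := (zero_lt_one.trans_le hs).ne'
    rw [modNorm_eq_mixedLpNorm (ne_zero (hp.trans hpQ)) (ne_zero hq),
      modNorm_eq_mixedLpNorm (ne_zero hp) (ne_zero hq)]
    refine mixedLpNorm_le_of_le_lintegral_translate (A := fun x ω => ‖STFT F x ω‖ₑ) hp hpQ hq
      (by fun_prop) (fun y => ?_) (by fun_prop) (by fun_prop)
      (enorm_STFT_le_lintegral_translate hF)
    rw [enorm_pow]
    exact pow_le_one₀ zero_le (by simpa [← ofReal_norm] using norm_gaussWin_le_one y)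

end ChangeOfExponent

section PhaseSpace

variable {d : ℕ}

local notation "V" => EuclideanSpace ℝ (Fin d)

local notation "W" => EuclideanSpace ℝ (Fin d ⊕ Fin d)

@[simp]
lemma xpart_pairE (x ω : V) : xpart (pairE x ω) = x := rfl

@[simp]
lemma wpart_pairE (x ω : V) : wpart (pairE x ω) = ω := rfl

lemma xpart_sub (z w : W) : xpart (z - w) = xpart z - xpart w := rfl

lemma wpart_sub (z w : W) : wpart (z - w) = wpart z - wpart w := rfl

@[fun_prop]
lemma measurable_xpart : Measurable (xpart : W → V) := by
  unfold xpart
  fun_prop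

@[fun_prop]
lemma measurable_wpart : Measurable (wpart : W → V) := by
  unfold wpart
  fun_prop

lemma inner_pairE_left (x ω : V) (z : W) :
    inner ℝ (pairE x ω) z = inner ℝ x (xpart z) + inner ℝ ω (wpart z) := by
  simp [PiLp.inner_apply, pairE, xpart, wpart]

lemma gaussWin_eq_gaussWin_xpart_mul_gaussWin_wpart (z : W) :
    gaussWin z = gaussWin (xpart z) * gaussWin (wpart z) := by
  have norm_sq_eq : ‖z‖ ^ 2 = ‖xpart z‖ ^ 2 + ‖wpart z‖ ^ 2 := by
    simp [EuclideanSpace.norm_sq_eq, xpart, wpart]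
  have norm_sq_eq' := congrArg (fun r : ℝ => (r : ℂ)) norm_sq_eq
  push_cast at norm_sq_eq'
  rw [gaussWin, gaussWin, gaussWin, ← Complex.exp_add, norm_sq_eq']
  ring_nf

lemma measurePreserving_pairE :
    MeasurePreserving (fun z : V × V => pairE z.1 z.2) (volume.prod volume) volume :=
  (PiLp.volume_preserving_toLp (Fin d ⊕ Fin d)).comp
    ((volume_measurePreserving_sumPiEquivProdPi_symm fun _ : Fin d ⊕ Fin d => ℝ).comp
      ((EuclideanSpace.volume_preserving_symm_measurableEquiv_toLp (Fin d)).prod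
        (EuclideanSpace.volume_preserving_symm_measurableEquiv_toLp (Fin d))))

@[fun_prop]
lemma measurable_pairE : Measurable fun z : V × V => pairE z.1 z.2 :=
  measurePreserving_pairE.measurable

lemma integral_eq_integral_integral_pairE {F : W → ℂ} (hF : Integrable F) :
    ∫ z, F z = ∫ t : V, ∫ τ : V, F (pairE t τ) := by
  have h_int : Integrable (fun z : V × V => F (pairE z.1 z.2)) (volume.prod volume) :=
    measurePreserving_pairE.integrable_comp_of_integrable hF
  rw [← integral_prod _ h_int, ← measurePreserving_pairE.map_eq,
    integral_map measurable_pairE.aemeasurable (measurePreserving_pairE.map_eq ▸ hF.1)]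

/-- The window on phase space through which the symbol of a Kohn–Nirenberg operator enters the
short-time Fourier transform of its output. -/
def knWindow (z : W) : ℂ :=
  gaussWin (xpart z) * gaussWin (wpart z) ^ 2 * 𝐞 (inner ℝ (xpart z) (wpart z))

@[fun_prop]
lemma measurable_knWindow : Measurable (knWindow : W → ℂ) := by
  unfold knWindow
  fun_prop

lemma knWindow_eq_integral_gaussCoeff_mul (z : W) :
    knWindow z = ∫ l : V × V, gaussCoeff l *
      (gaussWin (z - pairE l.1 0) * 𝐞 (inner ℝ (pairE l.2 ((2 : ℝ) • l.1)) z)) := by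
  have h_integrand (l : V × V) : gaussCoeff l *
      (gaussWin (z - pairE l.1 0) * 𝐞 (inner ℝ (pairE l.2 ((2 : ℝ) • l.1)) z)) =
      gaussWin (wpart z) * (gaussCoeff l * (gaussWin (xpart z - l.1) *
        𝐞 (inner ℝ l.2 (xpart z) + 2 * inner ℝ l.1 (wpart z)))) := by
    rw [gaussWin_eq_gaussWin_xpart_mul_gaussWin_wpart, inner_pairE_left, xpart_sub, wpart_sub,
      xpart_pairE, wpart_pairE, sub_zero, real_inner_smul_left]
    ring
  simp only [h_integrand, integral_const_mul, integral_gaussCoeff_mul]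
  rw [knWindow]
  ring

lemma mixedLpNorm_windowSTFT_knWindow_le {p q : ℝ≥0∞} (hp : 1 ≤ p) (hq : 1 ≤ q) {a : W → ℂ}
    (ha : Integrable a) :
    mixedLpNorm (fun x ω => ‖windowSTFT knWindow a x ω‖ₑ) p q volume volume ≤
      (∫⁻ l : V × V, ‖gaussCoeff l‖ₑ) * modNorm p q a := by
  have hSTFT := measurable_STFT ha
  rw [modNorm_eq_mixedLpNorm (zero_lt_one.trans_le hp).ne' (zero_lt_one.trans_le hq).ne']
  refine (mixedLpNorm_mono fun x ω => ?_).trans <|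
    mixedLpNorm_lintegral_mul_translate_le (c := fun l : V × V => ‖gaussCoeff l‖ₑ)
      (y := fun l => pairE l.1 0) (θ := fun l => pairE l.2 ((2 : ℝ) • l.1))
      (A := fun x ω => ‖STFT a x ω‖ₑ) hp hq (by fun_prop) (by fun_prop)
      (by fun_prop) (by fun_prop)
  rw [STFT_eq_windowSTFT a]
  exact enorm_windowSTFT_le_lintegral_translate (F := a) (Φ := knWindow) (g := gaussWin)
    (c := gaussCoeff) (y := fun l => pairE l.1 0) (θ := fun l => pairE l.2 ((2 : ℝ) • l.1))
    integrable_gaussCoeff (by fun_prop) (by fun_prop) measurable_gaussWin norm_gaussWin_le_one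
    knWindow_eq_integral_gaussCoeff_mul ha x ω

end PhaseSpace

section FourierTransform

variable {ι : Type*} [Fintype ι] {f : EuclideanSpace ℝ ι → ℂ}

lemma fTrans_eq_integral (f : EuclideanSpace ℝ ι → ℂ) (τ : EuclideanSpace ℝ ι) :
    fTrans f τ = ∫ t, f t * 𝐞 (-inner ℝ t τ) := by
  simp only [fTrans, fourierChar_eq_cexp, ofReal_neg, mul_neg]

lemma norm_fTrans_le (f : EuclideanSpace ℝ ι → ℂ) (τ : EuclideanSpace ℝ ι) :
    ‖fTrans f τ‖ ≤ ∫ t, ‖f t‖ := by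
  rw [fTrans_eq_integral]
  exact (norm_integral_le_integral_norm _).trans_eq (by
    simp only [norm_mul, Circle.norm_coe, mul_one])

lemma continuous_fTrans (hf : Integrable f) : Continuous (fTrans f) := by
  have fTrans_eq_fourier : fTrans f = 𝓕 f := by
    ext τ
    simp only [fTrans_eq_integral, Real.fourier_eq, Circle.smul_def, smul_eq_mul, mul_comm]
  rw [fTrans_eq_fourier]
  exact VectorFourier.fourierIntegral_continuous Real.continuous_fourierChar
    continuous_inner hf

section Averaging

variable {α G : Type*} [MeasurableSpace α] {μ : Measure α} [SFinite μ] [AddGroup G]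
  [MeasurableSpace G] [MeasurableAdd₂ G] [MeasurableNeg G] {ν : Measure G} [SFinite ν]
  [ν.IsNegInvariant] [ν.IsAddLeftInvariant] {B : α → ℂ} {g : G → ℂ} {τ : α → G}

lemma integrable_mul_comp_sub (hB : Integrable B μ) (hg : Integrable g ν) (hτ : Measurable τ) :
    Integrable (fun z : α × G => B z.1 * g (τ z.1 - z.2)) (μ.prod ν) := by
  have shear : MeasurePreserving (fun z : α × G => (z.1, τ z.1 - z.2)) (μ.prod ν) (μ.prod ν) :=
    (MeasurePreserving.id μ).skew_product (g := fun z v => τ z - v) (by fun_prop)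
      (ae_of_all _ fun z => (Measure.measurePreserving_sub_left ν (τ z)).map_eq)
  exact shear.integrable_comp_of_integrable (hB.mul_prod hg)

lemma integral_mul_integral_eq_integral_integral_comp_sub (hB : Integrable B μ)
    (hg : Integrable g ν) (hτ : Measurable τ) :
    (∫ v, g v ∂ν) * ∫ z, B z ∂μ = ∫ v, ∫ z, B z * g (τ z - v) ∂μ ∂ν := by
  rw [← integral_integral_swap (integrable_mul_comp_sub hB hg hτ), ← integral_const_mul]
  simp only [integral_const_mul, mul_comm (B _), integral_mul_const,
    integral_sub_left_eq_self g ν]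

end Averaging

lemma integrable_STFT_left (hf : Integrable f) (v : EuclideanSpace ℝ ι) :
    Integrable fun u => STFT f u v := by
  have h_int : Integrable fun z : EuclideanSpace ℝ ι × EuclideanSpace ℝ ι =>
      f z.1 * gaussWin (z.1 - z.2) * 𝐞 (-inner ℝ v z.1) :=
    (integrable_mul_comp_sub hf integrable_gaussWin measurable_id).mul_bdd (c := 1) (by fun_prop)
      (ae_of_all _ fun _ => (Circle.norm_coe _).le)
  simpa only [STFT_eq_windowSTFT, windowSTFT] using h_int.integral_prod_right

lemma integral_gaussWin_sub_mul_fourierChar (t v τ : EuclideanSpace ℝ ι) :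
    ∫ u, gaussWin (t - u) * 𝐞 (inner ℝ u (v - τ)) =
      𝐞 (inner ℝ t (v - τ)) * gaussWin (τ - v) :=
  calc ∫ u, gaussWin (t - u) * 𝐞 (inner ℝ u (v - τ))
      = ∫ u, 𝐞 (inner ℝ t (v - τ)) * (gaussWin (t - u) * 𝐞 (inner ℝ (t - u) (τ - v))) := by
        congr with u
        rw [show inner ℝ u (v - τ) = inner ℝ t (v - τ) + inner ℝ (t - u) (τ - v) by
          simp only [inner_sub_left, inner_sub_right]; ring, coe_fourierChar_add]
        ring
    _ = 𝐞 (inner ℝ t (v - τ)) * gaussWin (τ - v) := by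
        rw [integral_const_mul, integral_sub_left_eq_self
          (fun w => gaussWin w * (𝐞 (inner ℝ w (τ - v)) : ℂ)) volume t,
          integral_gaussWin_mul_fourierChar]

lemma integral_STFT_mul_fourierChar (hf : Integrable f) (v τ : EuclideanSpace ℝ ι) :
    ∫ u, STFT f u v * 𝐞 (inner ℝ u (v - τ)) = fTrans f τ * gaussWin (τ - v) := by
  have h_int : Integrable fun z : EuclideanSpace ℝ ι × EuclideanSpace ℝ ι =>
      f z.1 * gaussWin (z.1 - z.2) * (𝐞 (-inner ℝ v z.1) * 𝐞 (inner ℝ z.2 (v - τ))) :=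
    (integrable_mul_comp_sub hf integrable_gaussWin measurable_id).mul_bdd (c := 1) (by fun_prop)
      (ae_of_all _ fun _ => by simp only [norm_mul, Circle.norm_coe, mul_one, le_refl])
  calc ∫ u, STFT f u v * 𝐞 (inner ℝ u (v - τ))
      = ∫ u, ∫ t, f t * gaussWin (t - u) * (𝐞 (-inner ℝ v t) * 𝐞 (inner ℝ u (v - τ))) := by
        simp only [STFT_eq_windowSTFT, windowSTFT, ← integral_mul_const, mul_assoc]
    _ = ∫ t, ∫ u, f t * gaussWin (t - u) * (𝐞 (-inner ℝ v t) * 𝐞 (inner ℝ u (v - τ))) :=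
        (integral_integral_swap h_int).symm
    _ = ∫ t, f t * 𝐞 (-inner ℝ v t) * ∫ u, gaussWin (t - u) * 𝐞 (inner ℝ u (v - τ)) := by
        simp only [← integral_const_mul]
        congr! 4
        ring
    _ = fTrans f τ * gaussWin (τ - v) := by
        simp only [integral_gaussWin_sub_mul_fourierChar, fTrans_eq_integral, ← integral_mul_const]
        congr with t
        rw [show -inner ℝ t τ = -inner ℝ v t + inner ℝ t (v - τ) by
          rw [inner_sub_right, real_inner_comm v t]; ring, coe_fourierChar_add]
        ring

variable {α : Type*} [MeasurableSpace α] {μ : Measure α} [SFinite μ] {B : α → ℂ}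
  {τ : α → EuclideanSpace ℝ ι}

lemma integral_mul_fTrans_mul_gaussWin (hB : Integrable B μ) (hτ : Measurable τ)
    (hf : Integrable f) (v : EuclideanSpace ℝ ι) :
    ∫ z, B z * (fTrans f (τ z) * gaussWin (τ z - v)) ∂μ =
      ∫ u, STFT f u v * ∫ z, B z * 𝐞 (inner ℝ u (v - τ z)) ∂μ := by
  have h_int : Integrable (fun z : α × EuclideanSpace ℝ ι =>
      B z.1 * STFT f z.2 v * 𝐞 (inner ℝ z.2 (v - τ z.1))) (μ.prod volume) :=
    (hB.mul_prod (integrable_STFT_left hf v)).mul_bdd (c := 1) (by fun_prop)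
      (ae_of_all _ fun _ => (Circle.norm_coe _).le)
  calc ∫ z, B z * (fTrans f (τ z) * gaussWin (τ z - v)) ∂μ
      = ∫ z, ∫ u, B z * STFT f u v * 𝐞 (inner ℝ u (v - τ z)) ∂volume ∂μ := by
        simp only [← integral_STFT_mul_fourierChar hf, ← integral_const_mul, mul_assoc]
    _ = ∫ u, ∫ z, B z * STFT f u v * 𝐞 (inner ℝ u (v - τ z)) ∂μ := integral_integral_swap h_int
    _ = ∫ u, STFT f u v * ∫ z, B z * 𝐞 (inner ℝ u (v - τ z)) ∂μ := by
        simp only [← integral_const_mul, mul_left_comm, mul_assoc]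

lemma integral_gaussWin_pow_three_mul_integral_mul_fTrans (hB : Integrable B μ)
    (hτ : Measurable τ) (hf : Integrable f) :
    (∫ v : EuclideanSpace ℝ ι, gaussWin v ^ 3) * ∫ z, B z * fTrans f (τ z) ∂μ =
      ∫ v, ∫ u, STFT f u v *
        ∫ z, B z * gaussWin (τ z - v) ^ 2 * 𝐞 (inner ℝ u (v - τ z)) ∂μ := by
  have hf_meas : Measurable (fTrans f) := (continuous_fTrans hf).measurable
  have h_int : Integrable (fun z => B z * fTrans f (τ z)) μ :=
    hB.mul_bdd (hf_meas.comp hτ).aestronglyMeasurable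
      (ae_of_all _ fun z => norm_fTrans_le f (τ z))
  have hB_window (v : EuclideanSpace ℝ ι) :
      Integrable (fun z => B z * gaussWin (τ z - v) ^ 2) μ :=
    hB.mul_bdd (c := 1) (Measurable.aestronglyMeasurable (by fun_prop)) (ae_of_all _ fun z => by
      simpa only [norm_pow] using pow_le_one₀ (norm_nonneg _) (norm_gaussWin_le_one _))
  rw [integral_mul_integral_eq_integral_integral_comp_sub h_int (integrable_gaussWin_pow 2) hτ]
  congr with v
  rw [← integral_mul_fTrans_mul_gaussWin (hB_window v) hτ hf]
  congr with z
  ring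

end FourierTransform

section KohnNirenberg

variable {d : ℕ}

local notation "V" => EuclideanSpace ℝ (Fin d)

local notation "W" => EuclideanSpace ℝ (Fin d ⊕ Fin d)

lemma integrable_mul_gaussWin_mul_fourierChar {a : W → ℂ} (ha : Integrable a) (x ω : V) :
    Integrable fun z => a z * (gaussWin (xpart z - x) *
      𝐞 (inner ℝ (xpart z) (wpart z) - inner ℝ ω (xpart z))) :=
  ha.mul_bdd (c := 1) (Measurable.aestronglyMeasurable (by fun_prop)) (ae_of_all _ fun z => by
    simpa only [norm_mul, Circle.norm_coe, mul_one] using norm_gaussWin_le_one (xpart z - x))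

lemma STFT_KNop_eq_integral {a : W → ℂ} (ha : Integrable a) {f : V → ℂ} (hf : Integrable f)
    (x ω : V) :
    STFT (KNop a f) x ω = ∫ z, a z * (gaussWin (xpart z - x) *
      𝐞 (inner ℝ (xpart z) (wpart z) - inner ℝ ω (xpart z))) * fTrans f (wpart z) := by
  have hf_meas : Measurable (fTrans f) := (continuous_fTrans hf).measurable
  have h_int : Integrable fun z => a z * (gaussWin (xpart z - x) *
      𝐞 (inner ℝ (xpart z) (wpart z) - inner ℝ ω (xpart z))) * fTrans f (wpart z) :=
    (integrable_mul_gaussWin_mul_fourierChar ha x ω).mul_bdd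
      (hf_meas.comp measurable_wpart).aestronglyMeasurable
      (ae_of_all _ fun z => norm_fTrans_le f (wpart z))
  rw [integral_eq_integral_integral_pairE h_int]
  simp only [STFT_eq_windowSTFT, windowSTFT, KNop, ← fourierChar_eq_cexp, ← integral_mul_const,
    xpart_pairE, wpart_pairE, sub_eq_add_neg (inner ℝ _ _), coe_fourierChar_add]
  congr! 4
  ring

lemma integral_mul_knWindow_factors {a : W → ℂ} (x ω u v : V) :
    ∫ z, a z * (gaussWin (xpart z - x) *
        𝐞 (inner ℝ (xpart z) (wpart z) - inner ℝ ω (xpart z))) *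
        gaussWin (wpart z - v) ^ 2 * 𝐞 (inner ℝ u (v - wpart z)) =
      𝐞 (inner ℝ (u - x) v) * windowSTFT knWindow a (pairE x v) (pairE (ω - v) (u - x)) := by
  rw [windowSTFT, ← integral_const_mul]
  congr with z
  have phase_eq : (𝐞 (inner ℝ (xpart z) (wpart z) - inner ℝ ω (xpart z)) : ℂ) *
      𝐞 (inner ℝ u (v - wpart z)) = 𝐞 (inner ℝ (u - x) v) *
        (𝐞 (inner ℝ (xpart z - x) (wpart z - v)) * 𝐞 (-inner ℝ (pairE (ω - v) (u - x)) z)) := by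
    simp only [← coe_fourierChar_add]
    congr 2
    simp only [inner_pairE_left, inner_sub_left, inner_sub_right, real_inner_comm v (xpart z)]
    ring
  rw [knWindow, xpart_sub, wpart_sub, xpart_pairE, wpart_pairE]
  linear_combination a z * gaussWin (xpart z - x) * gaussWin (wpart z - v) ^ 2 * phase_eq

/-- The modulus of the kernel through which the operator with symbol `a` acts on short-time Fourier
transforms, from the point `z + w` of phase space to the point `z`. -/
def knKernel (a : W → ℂ) (z w : V × V) : ℝ≥0∞ :=
  ‖windowSTFT knWindow a (pairE z.1 (z.2 + w.2)) (pairE (-w.2) w.1)‖ₑ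

lemma measurable_knKernel {a : W → ℂ} (ha : Integrable a) : Measurable (knKernel a).uncurry := by
  have h := measurable_windowSTFT measurable_knWindow ha.aestronglyMeasurable
  unfold knKernel
  fun_prop

lemma enorm_STFT_KNop_le {a : W → ℂ} (ha : Integrable a) {f : V → ℂ} (hf : Integrable f)
    (x ω : V) :
    ‖STFT (KNop a f) x ω‖ₑ ≤ ‖(∫ v : V, gaussWin v ^ 3)⁻¹‖ₑ *
      ∫⁻ h : V, ∫⁻ η : V, knKernel a (x, ω) (η, h) * ‖STFT f (x + η) (ω + h)‖ₑ := by
  have STFT_eq : STFT (KNop a f) x ω = (∫ v : V, gaussWin v ^ 3)⁻¹ * ∫ v, ∫ u, STFT f u v *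
      (𝐞 (inner ℝ (u - x) v) * windowSTFT knWindow a (pairE x v) (pairE (ω - v) (u - x))) := by
    rw [eq_inv_mul_iff_mul_eq₀ integral_gaussWin_pow_three_ne_zero, STFT_KNop_eq_integral ha hf,
      integral_gaussWin_pow_three_mul_integral_mul_fTrans
        (integrable_mul_gaussWin_mul_fourierChar ha x ω) measurable_wpart hf]
    simp only [integral_mul_knWindow_factors]
  rw [STFT_eq, enorm_mul]
  gcongr
  calc _ ≤ ∫⁻ v, ∫⁻ u, ‖STFT f u v *
          (𝐞 (inner ℝ (u - x) v) * windowSTFT knWindow a (pairE x v) (pairE (ω - v) (u - x)))‖ₑ :=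
        (enorm_integral_le_lintegral_enorm _).trans
          (lintegral_mono fun v => enorm_integral_le_lintegral_enorm _)
    _ = _ := by
        rw [← lintegral_add_left_eq_self _ ω]
        refine lintegral_congr fun h => ?_
        rw [← lintegral_add_left_eq_self _ x]
        refine lintegral_congr fun η => ?_
        rw [enorm_mul, enorm_mul, enorm_coe_circle, one_mul, mul_comm, knKernel,
          sub_add_cancel_left, add_sub_cancel_left]

lemma mixedLpNorm_knKernel {a : W → ℂ} (ha : Integrable a) (p q : ℝ≥0∞) :
    mixedLpNorm (knKernel a) p q (volume.prod volume) (volume.prod volume) =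
      mixedLpNorm (fun x ω => ‖windowSTFT knWindow a x ω‖ₑ) p q volume volume := by
  have h := measurable_windowSTFT measurable_knWindow ha.aestronglyMeasurable
  exact mixedLpNorm_comp_eq (f := fun x ω => ‖windowSTFT knWindow a x ω‖ₑ)
    (e := fun w z : V × V => pairE z.1 (z.2 + w.2)) (g := fun w : V × V => pairE (-w.2) w.1)
    (by fun_prop)
    (fun w => measurePreserving_pairE.comp
      ((MeasurePreserving.id volume).prod (measurePreserving_add_right volume w.2)))
    (measurePreserving_pairE.comp
      (((Measure.measurePreserving_neg volume).prod (MeasurePreserving.id volume)).comp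
        Measure.measurePreserving_swap))

end KohnNirenberg

section Boundedness

variable {d : ℕ}

local notation "V" => EuclideanSpace ℝ (Fin d)

local notation "W" => EuclideanSpace ℝ (Fin d ⊕ Fin d)

lemma modNorm_KNop_le {q Q r s : ℝ≥0∞} [q.HolderConjugate Q] (hq_top : q ≠ ∞) (hqr : q ≤ r)
    (hrQ : r ≤ Q) (hqs : q ≤ s) (hsQ : s ≤ Q) {a : W → ℂ} (ha : Integrable a) {f : V → ℂ}
    (hf : Integrable f) :
    modNorm r s (KNop a f) ≤ ‖(∫ v : V, gaussWin v ^ 3)⁻¹‖ₑ *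
      (∫⁻ l : V × V, ‖gaussCoeff l‖ₑ) * modNorm Q q a * modNorm r s f := by
  have hq : 1 ≤ q := ENNReal.HolderConjugate.one_le q Q
  have hr : r ≠ 0 := (zero_lt_one.trans_le (hq.trans hqr)).ne'
  have hs : s ≠ 0 := (zero_lt_one.trans_le (hq.trans hqs)).ne'
  have hK := measurable_knKernel ha
  have hF := measurable_STFT hf
  have integrand_meas : Measurable fun z : ((V × V) × V) × V => knKernel a z.1.1 (z.2, z.1.2) *
      ‖STFT f (z.1.1.1 + z.2) (z.1.1.2 + z.1.2)‖ₑ := by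
    fun_prop
  rw [modNorm_eq_mixedLpNorm hr hs, modNorm_eq_mixedLpNorm hr hs]
  calc mixedLpNorm (fun x ω => ‖STFT (KNop a f) x ω‖ₑ) r s volume volume
      ≤ ‖(∫ v : V, gaussWin v ^ 3)⁻¹‖ₑ * mixedLpNorm (fun x ω => ∫⁻ h : V, ∫⁻ η : V,
          knKernel a (x, ω) (η, h) * ‖STFT f (x + η) (ω + h)‖ₑ) r s volume volume :=
        (mixedLpNorm_mono (enorm_STFT_KNop_le ha hf)).trans_eq
          (mixedLpNorm_const_mul integrand_meas.lintegral_prod_right.lintegral_prod_right _)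
    _ ≤ ‖(∫ v : V, gaussWin v ^ 3)⁻¹‖ₑ *
          (mixedLpNorm (knKernel a) Q q (volume.prod volume) (volume.prod volume) *
            mixedLpNorm (fun x ω => ‖STFT f x ω‖ₑ) r s volume volume) := by
        gcongr
        exact mixedLpNorm_lintegral_mul_comp_add_le (F := fun x ω => ‖STFT f x ω‖ₑ)
          hq_top hqr hrQ hqs hsQ hK (by fun_prop)
    _ ≤ _ := by
        rw [mixedLpNorm_knKernel ha, ← mul_assoc, mul_assoc ‖_‖ₑ (∫⁻ _, _)]
        gcongr
        exact mixedLpNorm_windowSTFT_knWindow_le (hq.trans (hqr.trans hrQ)) hq ha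

end Boundedness

theorem kn_Mpq_bounded_on_modulation_general (d : ℕ) :
    ∃ C : ℝ, 0 < C ∧ ∀ {p q r s : ℝ≥0∞}, 1 ≤ p → 1 ≤ q → p ≤ dualExp q →
      q ≤ min (min r (dualExp r)) (min s (dualExp s)) →
      ∀ {a : EuclideanSpace ℝ (Fin d ⊕ Fin d) → ℂ} {f : EuclideanSpace ℝ (Fin d) → ℂ},
        Integrable a → Integrable f →
        modNorm r s (KNop a f) ≤ ENNReal.ofReal C * modNorm p q a * modNorm r s f := by
  obtain ⟨A, A_ne_top, modNorm_le⟩ := exists_modNorm_le_of_le (Fin d ⊕ Fin d)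
  let B : ℝ≥0∞ := ‖(∫ v : EuclideanSpace ℝ (Fin d), gaussWin v ^ 3)⁻¹‖ₑ *
    ∫⁻ l : EuclideanSpace ℝ (Fin d) × EuclideanSpace ℝ (Fin d), ‖gaussCoeff l‖ₑ
  have BA_ne_top : B * A ≠ ∞ :=
    mul_ne_top (mul_ne_top enorm_ne_top integrable_gaussCoeff.2.ne) A_ne_top
  have BA_le : B * A ≤ ENNReal.ofReal ((B * A).toReal + 1) :=
    (le_ofReal_iff_toReal_le BA_ne_top (by positivity)).2 (le_add_of_nonneg_right zero_le_one)
  refine ⟨(B * A).toReal + 1, by positivity, fun {p q r s} hp hq hpq hqrs {a f} ha hf => ?_⟩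
  obtain ⟨⟨hqr, hqr'⟩, hqs, hqs'⟩ := by simpa only [le_min_iff] using hqrs
  have := holderConjugate_dualExp hq
  have hrq := (le_dualExp_comm hq (hq.trans hqr)).1 hqr'
  have hsq := (le_dualExp_comm hq (hq.trans hqs)).1 hqs'
  calc modNorm r s (KNop a f) ≤ B * modNorm (dualExp q) q a * modNorm r s f :=
        modNorm_KNop_le (ne_top_of_le_of_le_dualExp hqr hqr') hqr hrq hqs hsq ha hf
    _ ≤ B * (A * modNorm p q a) * modNorm r s f := by gcongr; exact modNorm_le hp hpq hq ha
    _ ≤ ENNReal.ofReal ((B * A).toReal + 1) * modNorm p q a * modNorm r s f := by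
        rw [← mul_assoc]
        gcongr

end

/-- if `p ≤ q'` and `q ≤ min{r,r',s,s'}`, then symbols in `M^{p,q}`
give operators bounded on `M^{r,s}`. -/
theorem kn_Mpq_bounded_on_modulation (d : ℕ) (p q r s : ℝ≥0∞)
    (hp : 1 ≤ p) (hq : 1 ≤ q) (hr : 1 ≤ r) (hs : 1 ≤ s)
    (h1 : p ≤ dualExp q)
    (h2 : q ≤ min (min r (dualExp r)) (min s (dualExp s))) :
    ∃ C : ℝ, 0 < C ∧
      ∀ (a : SchwartzMap (EuclideanSpace ℝ (Fin d ⊕ Fin d)) ℂ)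
        (f : SchwartzMap (EuclideanSpace ℝ (Fin d)) ℂ),
        modNorm r s (KNop ⇑a ⇑f) ≤
          ENNReal.ofReal C * modNorm p q ⇑a * modNorm r s ⇑f := by
  obtain ⟨C, hC, h_le⟩ := kn_Mpq_bounded_on_modulation_general d
  exact ⟨C, hC, fun a f => h_le hp hq h1 h2 a.integrable f.integrable⟩
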